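/- arXiv:1803.10337 — 2 statements merged into one kernel-verified Lean document; each statement's English description precedes it below -/
import Mathlib

section
/- Assume a−b is odd and N_m ≠ 0 (i.e. the associated normalized rank-2 bundle with c_1 = −1 is unstable), and let k = max{ j ∈ ℤ : N_{m−j} ≠ 0 } be the index of instability (necessarily k ≥ 0). Then for a general linear form L ∈ R_1, the multiplication map ×L : M_{d−1} → M_d is injective for all d ≤ m+k and surjective for all d ≥ m−k−1. -/
open MvPolynomial

noncomputable section

variable {K : Type*} [Field K]

/-- `p` is homogeneous of (integer) degree `d`; for `d < 0` this forces `p = 0`. -/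
def homog (p : MvPolynomial (Fin 3) K) (d : ℤ) : Prop :=
  IsWeightedHomogeneous (fun _ : Fin 3 => (1 : ℤ)) p d

/-- The degree-`d` graded piece of `⊕_{i=1}^{N} R(-a i)`, as a `K`-subspace of
`Fin N → R`, `R = K[x,y,z]`. -/
def degPiece (N : ℕ) (a : Fin N → ℤ) (d : ℤ) :
    Submodule K (Fin N → MvPolynomial (Fin 3) K) :=
  Submodule.pi Set.univ fun i =>
    weightedHomogeneousSubmodule K (fun _ : Fin 3 => (1 : ℤ)) (d - a i)

lemma mem_degPiece {N : ℕ} {a : Fin N → ℤ} {d : ℤ} {v : Fin N → MvPolynomial (Fin 3) K} :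
    v ∈ degPiece (K := K) N a d ↔ ∀ i, homog (v i) (d - a i) := by
  simp [degPiece, Submodule.mem_pi, mem_weightedHomogeneousSubmodule, homog]

/-- The map `φ : ⊕ R(-a i) → ⊕ R(-b j)` given by the matrix `Φ`, as a `K`-linear map. -/
def phiK (n : ℕ) (Φ : Matrix (Fin n) (Fin (n + 2)) (MvPolynomial (Fin 3) K)) :
    (Fin (n + 2) → MvPolynomial (Fin 3) K) →ₗ[K] (Fin n → MvPolynomial (Fin 3) K) :=
  (Matrix.mulVecLin Φ).restrictScalars K

/-- The degree-`d` graded piece of `N = ker φ`. -/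
def Nd (n : ℕ) (a : Fin (n + 2) → ℤ) (Φ : Matrix (Fin n) (Fin (n + 2)) (MvPolynomial (Fin 3) K))
    (d : ℤ) : Submodule K (Fin (n + 2) → MvPolynomial (Fin 3) K) :=
  degPiece (n + 2) a d ⊓ LinearMap.ker (phiK n Φ)

/-- The image of the degree-`d` piece of `F` inside the degree-`d` piece of `G`,
viewed as a subspace of the latter. -/
def MdSub (n : ℕ) (a : Fin (n + 2) → ℤ) (b : Fin n → ℤ)
    (Φ : Matrix (Fin n) (Fin (n + 2)) (MvPolynomial (Fin 3) K)) (d : ℤ) :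
    Submodule K ↥(degPiece (K := K) n b d) :=
  Submodule.comap (degPiece (K := K) n b d).subtype
    (Submodule.map (phiK n Φ) (degPiece (n + 2) a d))

/-- The degree-`d` graded piece of `M = coker φ`. -/
abbrev Md (n : ℕ) (a : Fin (n + 2) → ℤ) (b : Fin n → ℤ)
    (Φ : Matrix (Fin n) (Fin (n + 2)) (MvPolynomial (Fin 3) K)) (d : ℤ) :=
  ↥(degPiece (K := K) n b d) ⧸ MdSub n a b Φ d

/-- Multiplication by `L` on tuples of polynomials, as a `K`-linear map. -/
def mulL (N : ℕ) (L : MvPolynomial (Fin 3) K) :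
    (Fin N → MvPolynomial (Fin 3) K) →ₗ[K] (Fin N → MvPolynomial (Fin 3) K) :=
  ((LinearMap.lsmul (MvPolynomial (Fin 3) K) (Fin N → MvPolynomial (Fin 3) K)) L).restrictScalars K

lemma mulL_apply {N : ℕ} (L : MvPolynomial (Fin 3) K) (v : Fin N → MvPolynomial (Fin 3) K) :
    mulL N L v = L • v := rfl

lemma mulL_mem {N : ℕ} {a : Fin N → ℤ} {L : MvPolynomial (Fin 3) K} (hL : homog L 1)
    {d : ℤ} {v : Fin N → MvPolynomial (Fin 3) K} (hv : v ∈ degPiece (K := K) N a (d - 1)) :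
    mulL N L v ∈ degPiece (K := K) N a d := by
  rw [mem_degPiece] at hv ⊢
  intro i
  have h := hL.mul (hv i)
  have e : (1 : ℤ) + (d - 1 - a i) = d - a i := by ring
  rw [e] at h
  simpa [mulL_apply, smul_eq_mul, homog] using h

/-- Multiplication by `L` from the degree-`d-1` piece of `G` to the degree-`d` piece. -/
def mulLres (n : ℕ) (b : Fin n → ℤ) (L : MvPolynomial (Fin 3) K) (hL : homog L 1) (d : ℤ) :
    ↥(degPiece (K := K) n b (d - 1)) →ₗ[K] ↥(degPiece (K := K) n b d) :=
  (mulL n L).restrict fun _ hv => mulL_mem hL hv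

lemma mulLres_comap (n : ℕ) (a : Fin (n + 2) → ℤ) (b : Fin n → ℤ)
    (Φ : Matrix (Fin n) (Fin (n + 2)) (MvPolynomial (Fin 3) K))
    (L : MvPolynomial (Fin 3) K) (hL : homog L 1) (d : ℤ) :
    MdSub n a b Φ (d - 1) ≤ Submodule.comap (mulLres n b L hL d) (MdSub n a b Φ d) := by
  rintro ⟨w, hw⟩ hmem
  obtain ⟨v, hv, hφv⟩ := hmem
  refine ⟨mulL (n + 2) L v, mulL_mem hL hv, ?_⟩
  show phiK n Φ (mulL (n + 2) L v) = ((mulLres n b L hL d) ⟨w, hw⟩ : Fin n → MvPolynomial (Fin 3) K)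
  have : phiK n Φ (mulL (n + 2) L v) = L • phiK n Φ v := by
    simp [phiK, mulL_apply]
  rw [this, hφv]
  rfl

/-- The map induced by multiplication by `L` from `M_{d-1}` to `M_d`,
where `M = coker φ`. -/
def mulLmap (n : ℕ) (a : Fin (n + 2) → ℤ) (b : Fin n → ℤ)
    (Φ : Matrix (Fin n) (Fin (n + 2)) (MvPolynomial (Fin 3) K))
    (L : MvPolynomial (Fin 3) K) (hL : homog L 1) (d : ℤ) :
    Md n a b Φ (d - 1) →ₗ[K] Md n a b Φ d :=
  Submodule.mapQ (MdSub n a b Φ (d - 1)) (MdSub n a b Φ d) (mulLres n b L hL d)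
    (mulLres_comap n a b Φ L hL d)

/-- The linear form with coefficient vector `c`. -/
def linform (c : Fin 3 → K) : MvPolynomial (Fin 3) K := ∑ i, C (c i) * X i

lemma homog_linform (c : Fin 3 → K) : homog (linform c) 1 := by
  rw [homog, ← mem_weightedHomogeneousSubmodule]
  refine sum_mem fun i _ => ?_
  rw [mem_weightedHomogeneousSubmodule]
  simpa using (isWeightedHomogeneous_C (fun _ : Fin 3 => (1 : ℤ)) (c i)).mul
    (isWeightedHomogeneous_X K (fun _ : Fin 3 => (1 : ℤ)) i)

/-- Finite length of `coker φ`: all sufficiently high graded pieces vanish. -/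
def FiniteColength (n : ℕ) (a : Fin (n + 2) → ℤ) (b : Fin n → ℤ)
    (Φ : Matrix (Fin n) (Fin (n + 2)) (MvPolynomial (Fin 3) K)) : Prop :=
  ∃ D : ℤ, ∀ d : ℤ, D ≤ d →
    degPiece (K := K) n b d ≤ Submodule.map (phiK n Φ) (degPiece (n + 2) a d)

end

/-!
Let `s ≠ 0` be an element of `N = ker Φ` of least degree `e`. By exactness of the Buchsbaum–Rim
complex, `s = B q`, where `B` is the skew-symmetric matrix of signed maximal minors of `Φ`; in other
words, the entries of `s` are the maximal minors of the matrix `(q; Φ)` obtained by adding the row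
`q`. Minimality of `e` prevents these entries from having a common factor, so they generate an ideal
of height at least two, whose restriction to a general line `L = 0` is primary to the irrelevant
ideal. On such a line the kernel of `(q; Φ)` is generated by `s`, and its cokernel has finite length
and vanishes in degrees at least `e - 1`, because a socle element in such a degree would lift.

The cokernel of `Φ` on the line is a quotient of that of `(q; Φ)`, which gives surjectivity. If
`L w = Φ v` with `v` of degree `d`, then `q ⬝ᵥ v` has degree `d + e - (∑ a - ∑ b) < 0`, so it
vanishes; hence `v` is a multiple of `s` on the line, that is `v = c s + L x`, and `w = Φ x`.
-/

section BorderedDeterminants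

open Matrix

variable {n : ℕ}

/-- The square matrix with rows `p`, `q` followed by the rows of `Φ`. -/
def borderedMatrix {R : Type*} (Φ : Matrix (Fin n) (Fin (n + 2)) R)
    (p q : Fin (n + 2) → R) : Matrix (Fin (n + 2)) (Fin (n + 2)) R :=
  of (vecCons p (vecCons q Φ))

lemma updateRow_borderedMatrix_zero {R : Type*} (Φ : Matrix (Fin n) (Fin (n + 2)) R)
    (p q r : Fin (n + 2) → R) :
    (borderedMatrix Φ p q).updateRow 0 r = borderedMatrix Φ r q := by
  funext i
  exact Fin.cases rfl (fun _ => rfl) i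

lemma updateRow_borderedMatrix_one {R : Type*} (Φ : Matrix (Fin n) (Fin (n + 2)) R)
    (p q r : Fin (n + 2) → R) :
    (borderedMatrix Φ p q).updateRow 1 r = borderedMatrix Φ p r := by
  funext i
  exact Fin.cases rfl (Fin.cases rfl fun _ => rfl) i

variable {R S : Type*} [CommRing R] [CommRing S]

/-- The determinant of `borderedMatrix Φ p q` as a bilinear form in the two bordering rows. -/
def borderedDet (Φ : Matrix (Fin n) (Fin (n + 2)) R) : LinearMap.BilinForm R (Fin (n + 2) → R) :=
  LinearMap.mk₂ R (fun p q => (detRowAlternating.curryLeft p).curryLeft q Φ)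
    (fun _ _ _ => by simp only [map_add]; rfl) (fun _ _ _ => by simp only [map_smul]; rfl)
    (fun _ _ _ => by simp only [map_add]; rfl) (fun _ _ _ => by simp only [map_smul]; rfl)

/-- The skew-symmetric matrix of signed maximal minors of `Φ`: its `(i, j)` entry is, up to sign,
the minor omitting the columns `i` and `j`. It is the differential preceding `Φ` in the
Buchsbaum–Rim complex of `Φ`, with `⋀² F` identified with the dual of `F`. -/
def borderedMinors (Φ : Matrix (Fin n) (Fin (n + 2)) R) : Matrix (Fin (n + 2)) (Fin (n + 2)) R :=
  LinearMap.BilinForm.toMatrix' (borderedDet Φ)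

/-- The ideal of maximal minors of `Φ`, generated by all bordered determinants. -/
def minorIdeal (Φ : Matrix (Fin n) (Fin (n + 2)) R) : Ideal R :=
  Ideal.span (Set.range fun pq : (Fin (n + 2) → R) × (Fin (n + 2) → R) =>
    borderedDet Φ pq.1 pq.2)

variable {Φ : Matrix (Fin n) (Fin (n + 2)) R} {p q r s v : Fin (n + 2) → R}

lemma det_borderedMatrix (Φ : Matrix (Fin n) (Fin (n + 2)) R) (p q : Fin (n + 2) → R) :
    (borderedMatrix Φ p q).det = borderedDet Φ p q := rfl

lemma borderedDet_self (Φ : Matrix (Fin n) (Fin (n + 2)) R) (p : Fin (n + 2) → R) :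
    borderedDet Φ p p = 0 :=
  det_zero_of_row_eq (M := borderedMatrix Φ p p) (i := 0) (j := 1) (by simp) rfl

lemma borderedDet_row (Φ : Matrix (Fin n) (Fin (n + 2)) R) (j : Fin n) (q : Fin (n + 2) → R) :
    borderedDet Φ (Φ j) q = 0 :=
  det_zero_of_row_eq (M := borderedMatrix Φ (Φ j) q) (i := 0) (j := j.succ.succ)
    (Fin.succ_ne_zero _).symm rfl

lemma neg_borderedDet (Φ : Matrix (Fin n) (Fin (n + 2)) R) (p q : Fin (n + 2) → R) :
    -borderedDet Φ p q = borderedDet Φ q p :=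
  LinearMap.IsAlt.neg (borderedDet_self Φ) p q

lemma borderedDet_mem_minorIdeal (Φ : Matrix (Fin n) (Fin (n + 2)) R) (p q : Fin (n + 2) → R) :
    borderedDet Φ p q ∈ minorIdeal Φ :=
  Ideal.subset_span ⟨(p, q), rfl⟩

lemma minorIdeal_le {I : Ideal R} (h : ∀ p q, borderedDet Φ p q ∈ I) : minorIdeal Φ ≤ I :=
  Ideal.span_le.2 <| by rintro _ ⟨⟨p, q⟩, rfl⟩; exact h p q

lemma dotProduct_borderedMinors_mulVec (Φ : Matrix (Fin n) (Fin (n + 2)) R)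
    (p q : Fin (n + 2) → R) : p ⬝ᵥ (borderedMinors Φ *ᵥ q) = borderedDet Φ p q := by
  rw [← toBilin'_apply', borderedMinors, toBilin'_toMatrix']

lemma borderedMinors_mulVec_apply (Φ : Matrix (Fin n) (Fin (n + 2)) R) (q : Fin (n + 2) → R)
    (i : Fin (n + 2)) : (borderedMinors Φ *ᵥ q) i = borderedDet Φ (Pi.single i 1) q := by
  rw [← dotProduct_borderedMinors_mulVec, single_one_dotProduct]

lemma mulVec_borderedMinors_mulVec (Φ : Matrix (Fin n) (Fin (n + 2)) R) (q : Fin (n + 2) → R) :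
    Φ *ᵥ (borderedMinors Φ *ᵥ q) = 0 := by
  ext j
  exact (dotProduct_borderedMinors_mulVec Φ (Φ j) q).trans (borderedDet_row Φ j q)

lemma borderedMatrix_mulVec (Φ : Matrix (Fin n) (Fin (n + 2)) R) (p q v : Fin (n + 2) → R) :
    borderedMatrix Φ p q *ᵥ v = vecCons (p ⬝ᵥ v) (vecCons (q ⬝ᵥ v) (Φ *ᵥ v)) := by
  ext i
  exact Fin.cases rfl (Fin.cases rfl fun _ => rfl) i

lemma vecMul_borderedMatrix (Φ : Matrix (Fin n) (Fin (n + 2)) R) (p q : Fin (n + 2) → R)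
    (x : Fin (n + 2) → R) :
    x ᵥ* borderedMatrix Φ p q = x 0 • p + x 1 • q + vecTail (vecTail x) ᵥ* Φ := by
  ext j
  simp only [vecMul, dotProduct, Fin.sum_univ_succ, add_assoc]; rfl

/-- Cramer's rule for `borderedMatrix Φ p q`. -/
lemma borderedDet_smul_of_mulVec_eq_zero (p q : Fin (n + 2) → R) (hv : Φ *ᵥ v = 0) :
    borderedDet Φ p q • v =
      (p ⬝ᵥ v) • (borderedMinors Φ *ᵥ q) - (q ⬝ᵥ v) • (borderedMinors Φ *ᵥ p) := by
  have hadj : (borderedMatrix Φ p q).adjugate *ᵥ (borderedMatrix Φ p q *ᵥ v) =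
      borderedDet Φ p q • v := by
    rw [mulVec_mulVec, adjugate_mul, smul_mulVec, one_mulVec, det_borderedMatrix]
  rw [← hadj, borderedMatrix_mulVec, hv]
  ext i
  have hcol : (borderedMatrix Φ p q).adjugate i 0 = borderedDet Φ (Pi.single i 1) q ∧
      (borderedMatrix Φ p q).adjugate i 1 = -borderedDet Φ (Pi.single i 1) p := by
    rw [neg_borderedDet, adjugate_apply, adjugate_apply, updateRow_borderedMatrix_zero,
      updateRow_borderedMatrix_one]
    exact ⟨rfl, rfl⟩
  calc _ = (borderedMatrix Φ p q).adjugate i 0 * (p ⬝ᵥ v)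
        + ((borderedMatrix Φ p q).adjugate i 1 * (q ⬝ᵥ v)
          + ∑ j : Fin n, (borderedMatrix Φ p q).adjugate i j.succ.succ * 0) := by
        rw [mulVec, dotProduct, Fin.sum_univ_succ, Fin.sum_univ_succ]; rfl
    _ = _ := by
        simp only [hcol.1, hcol.2, Pi.sub_apply, Pi.smul_apply, smul_eq_mul,
          borderedMinors_mulVec_apply, mul_zero, Finset.sum_const_zero]
        ring

lemma exists_borderedDet_smul_eq (Φ : Matrix (Fin n) (Fin (n + 2)) R) (p q r : Fin (n + 2) → R) :
    ∃ c : Fin n → R, borderedDet Φ p q • r =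
      borderedDet Φ r q • p + borderedDet Φ p r • q + c ᵥ* Φ := by
  have hcramer := mulVec_cramer (borderedMatrix Φ p q)ᵀ r
  rw [mulVec_transpose, det_transpose, det_borderedMatrix, vecMul_borderedMatrix,
    cramer_transpose_apply, cramer_transpose_apply, updateRow_borderedMatrix_zero,
    updateRow_borderedMatrix_one, det_borderedMatrix, det_borderedMatrix] at hcramer
  exact ⟨_, hcramer.symm⟩

lemma borderedDet_smul_eq_zero_of_vecMul_eq_zero (p q : Fin (n + 2) → R) {c : Fin n → R}
    (hc : c ᵥ* Φ = 0) : borderedDet Φ p q • c = 0 := by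
  have hB : vecCons 0 (vecCons 0 c) ᵥ* borderedMatrix Φ p q = 0 := by
    simp [vecMul_borderedMatrix, hc]
  have hadj := congrArg (· ᵥ* (borderedMatrix Φ p q).adjugate) hB
  simp only [vecMul_vecMul, mul_adjugate, vecMul_smul, vecMul_one, zero_vecMul,
    det_borderedMatrix] at hadj
  exact congrArg (vecTail ∘ vecTail) hadj

lemma exists_vecCons_mulVec_eq_borderedDet_smul (Φ : Matrix (Fin n) (Fin (n + 2)) R)
    (p q : Fin (n + 2) → R) (u : Fin (n + 1) → R) :
    ∃ x, of (vecCons q Φ) *ᵥ x = borderedDet Φ p q • u := by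
  refine ⟨(borderedMatrix Φ p q).adjugate *ᵥ vecCons 0 u, ?_⟩
  have hB : borderedMatrix Φ p q *ᵥ ((borderedMatrix Φ p q).adjugate *ᵥ vecCons 0 u) =
      borderedDet Φ p q • vecCons 0 u := by
    rw [mulVec_mulVec, mul_adjugate, smul_mulVec, one_mulVec, det_borderedMatrix]
  exact congrArg vecTail hB

lemma borderedDet_map (f : R →+* S) (Φ : Matrix (Fin n) (Fin (n + 2)) R)
    (p q : Fin (n + 2) → R) :
    borderedDet (Φ.map f) (f ∘ p) (f ∘ q) = f (borderedDet Φ p q) := by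
  rw [← det_borderedMatrix, ← det_borderedMatrix, f.map_det]
  congr 1
  funext i
  exact Fin.cases rfl (Fin.cases rfl fun _ => rfl) i

lemma borderedMinors_mulVec_vecMul (Φ : Matrix (Fin n) (Fin (n + 2)) R) (c : Fin n → R) :
    borderedMinors Φ *ᵥ (c ᵥ* Φ) = 0 := by
  funext i
  rw [borderedMinors_mulVec_apply, ← neg_borderedDet, ← dotProduct_borderedMinors_mulVec,
    ← dotProduct_mulVec, mulVec_borderedMinors_mulVec, dotProduct_zero, neg_zero, Pi.zero_apply]

lemma smul_eq_zero_of_mem_minorIdeal {t : R} (ht : t ∈ minorIdeal Φ) {c : Fin n → R}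
    (hc : c ᵥ* Φ = 0) : t • c = 0 := by
  rw [← Submodule.mem_annihilator_span_singleton]
  refine minorIdeal_le (fun p q => ?_) ht
  rw [Submodule.mem_annihilator_span_singleton]
  exact borderedDet_smul_eq_zero_of_vecMul_eq_zero p q hc

lemma smul_mem_range_vecMulLinear {t : R} (ht : t ∈ minorIdeal Φ)
    (hr : borderedMinors Φ *ᵥ r = 0) : t • r ∈ LinearMap.range (vecMulLinear Φ) := by
  rw [← Submodule.mem_colon_singleton]
  refine minorIdeal_le (fun p q => ?_) ht
  obtain ⟨c, hc⟩ := exists_borderedDet_smul_eq Φ p q r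
  have hvanish (p : Fin (n + 2) → R) : borderedDet Φ p r = 0 := by
    rw [← dotProduct_borderedMinors_mulVec, hr, dotProduct_zero]
  rw [← neg_borderedDet Φ q r, hvanish, hvanish, neg_zero, zero_smul, zero_smul, zero_add,
    zero_add] at hc
  exact Submodule.mem_colon_singleton.2 ⟨c, hc.symm⟩

lemma smul_mem_range_borderedMinors {t : R} (ht : t ∈ minorIdeal Φ) (hv : Φ *ᵥ v = 0) :
    t • v ∈ LinearMap.range (mulVecLin (borderedMinors Φ)) := by
  rw [← Submodule.mem_colon_singleton]
  refine minorIdeal_le (fun p q => Submodule.mem_colon_singleton.2 ?_) ht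
  rw [borderedDet_smul_of_mulVec_eq_zero p q hv]
  exact sub_mem (Submodule.smul_mem _ _ ⟨q, rfl⟩) (Submodule.smul_mem _ _ ⟨p, rfl⟩)

lemma comp_single_one {ι : Type*} [DecidableEq ι] (f : R →+* S) (i : ι) :
    f ∘ Pi.single i 1 = Pi.single i 1 := by
  funext j
  simp [Pi.single_apply, apply_ite f]

lemma map_borderedMinors_mulVec (f : R →+* S) (Φ : Matrix (Fin n) (Fin (n + 2)) R)
    (q : Fin (n + 2) → R) :
    f ∘ (borderedMinors Φ *ᵥ q) = borderedMinors (Φ.map f) *ᵥ (f ∘ q) := by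
  funext i
  rw [Function.comp_apply, borderedMinors_mulVec_apply, borderedMinors_mulVec_apply,
    ← comp_single_one f, borderedDet_map]

lemma dotProduct_smul_eq_of_mulVec_eq_zero (hv : Φ *ᵥ v = 0) (hqv : q ⬝ᵥ v = 0)
    (p : Fin (n + 2) → R) :
    (p ⬝ᵥ (borderedMinors Φ *ᵥ q)) • v = (p ⬝ᵥ v) • (borderedMinors Φ *ᵥ q) := by
  rw [dotProduct_borderedMinors_mulVec, borderedDet_smul_of_mulVec_eq_zero p q hv, hqv, zero_smul,
    sub_zero]

end BorderedDeterminants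

section MinorIdeal

open Matrix

lemma exists_borderedDet_ne_zero {K : Type*} [Field K] {n : ℕ}
    {Φ : Matrix (Fin n) (Fin (n + 2)) K} (hΦ : LinearIndependent K Φ.row) :
    ∃ p q, borderedDet Φ p q ≠ 0 := by
  obtain ⟨q, hq⟩ := exists_linearIndependent_cons_of_lt_finrank hΦ
    (by rw [Module.finrank_fin_fun]; omega)
  obtain ⟨p, hp⟩ := exists_linearIndependent_cons_of_lt_finrank hq
    (by rw [Module.finrank_fin_fun]; omega)
  have hunit : IsUnit (borderedMatrix Φ p q) := linearIndependent_rows_iff_isUnit.1 hp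
  exact ⟨p, q, ((isUnit_iff_isUnit_det _).1 hunit).ne_zero⟩

lemma borderedDet_map_eq_zero {R S : Type*} [CommRing R] [CommRing S] {f : R →+* S} {n : ℕ}
    {Φ : Matrix (Fin n) (Fin (n + 2)) R} (h : minorIdeal Φ ≤ RingHom.ker f) :
    borderedDet (Φ.map f) = 0 := by
  refine LinearMap.ext_basis (Pi.basisFun S _) (Pi.basisFun S _) fun i j => ?_
  rw [Pi.basisFun_apply, Pi.basisFun_apply, ← comp_single_one f, ← comp_single_one f,
    borderedDet_map]
  exact h (borderedDet_mem_minorIdeal Φ _ _)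

lemma mem_radical_minorIdeal {R : Type*} [CommRing R] {n : ℕ}
    {Φ : Matrix (Fin n) (Fin (n + 2)) R} {δ : R}
    (hδ : ∀ j, ∃ (N : ℕ) (v : Fin (n + 2) → R), Φ *ᵥ v = δ ^ N • Pi.single j 1) :
    δ ∈ (minorIdeal Φ).radical := by
  rw [Ideal.radical_eq_sInf, Ideal.mem_sInf]
  rintro P ⟨hle, hP⟩
  by_contra hδP
  let f : R →+* P.ResidueField := algebraMap R P.ResidueField
  have hfδ : f δ ≠ 0 := mt P.algebraMap_residueField_eq_zero.1 hδP
  have hindep : LinearIndependent P.ResidueField (Φ.map f).row := by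
    rw [← vecMul_injective_iff]
    refine (injective_iff_map_eq_zero (vecMulLinear (Φ.map f))).2 fun c hc => funext fun j => ?_
    obtain ⟨N, v, hv⟩ := hδ j
    have hmap : Φ.map f *ᵥ (f ∘ v) = f δ ^ N • Pi.single j 1 := by
      funext i
      rw [← RingHom.map_mulVec, hv, ← comp_single_one f]
      simp
    have hdot : c ⬝ᵥ (Φ.map f *ᵥ (f ∘ v)) = 0 := by
      rw [dotProduct_mulVec, ← vecMulLinear_apply, hc, zero_dotProduct]
    simpa [hmap, hfδ] using hdot
  obtain ⟨p, q, hpq⟩ := exists_borderedDet_ne_zero hindep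
  have hzero : borderedDet (Φ.map f) = 0 :=
    borderedDet_map_eq_zero (hle.trans_eq P.ker_algebraMap_residueField.symm)
  exact hpq (by rw [hzero]; rfl)

end MinorIdeal

section Acyclicity

variable {R : Type*} [CommRing R] {x y z : R}

lemma exists_smul_add_smul_of_smul_add_smul_eq_smul {κ : Type*} {u v w : κ → R}
    (hz : ∀ r, z * r ∈ Ideal.span {x, y} → r ∈ Ideal.span {x, y})
    (h : x • u + y • v = z • w) : ∃ d e, x • d + y • e = w := by
  have hw (i : κ) : w i ∈ Ideal.span {x, y} :=
    hz _ (Ideal.mem_span_pair.2 ⟨u i, v i, by simpa [mul_comm] using congrFun h i⟩)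
  choose d e hde using fun i => Ideal.mem_span_pair.1 (hw i)
  exact ⟨d, e, funext fun i => by simpa [mul_comm] using hde i⟩

variable [DecompositionMonoid R]

lemma exists_eq_smul_of_smul_eq_smul {κ : Type*} {u v : κ → R} (hxy : IsRelPrime x y)
    (h : x • u = y • v) : ∃ w, v = x • w := by
  choose w hw using fun i => hxy.dvd_of_dvd_mul_left ⟨u i, (congrFun h i).symm⟩
  exact ⟨w, funext hw⟩

variable [IsDomain R] {M : Type*} [AddCommGroup M] [Module R M] [Module.IsTorsionFree R M]

lemma mem_range_of_smul_mem_range {κ : Type*} {f : (κ → R) →ₗ[R] M}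
    (hf : Function.Injective f) (hx : x ≠ 0) (hxy : IsRelPrime x y) {u : M}
    (hxu : x • u ∈ LinearMap.range f) (hyu : y • u ∈ LinearMap.range f) :
    u ∈ LinearMap.range f := by
  obtain ⟨c, hc⟩ := hxu
  obtain ⟨d, hd⟩ := hyu
  have hcd : x • d = y • c := hf (by rw [map_smul, map_smul, hc, hd, smul_comm])
  obtain ⟨e, rfl⟩ := exists_eq_smul_of_smul_eq_smul hxy hcd
  exact ⟨e, smul_right_injective M hx ((map_smul f x e).symm.trans hc)⟩

/-- An instance of the acyclicity lemma of Peskine and Szpiro. -/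
lemma mem_range_of_smul_mem_range_of_exact {κ ι : Type*} {f : (κ → R) →ₗ[R] (ι → R)}
    {g : (ι → R) →ₗ[R] M} (hf : Function.Injective f) (hfg : Function.Exact f g) (hx : x ≠ 0)
    (hxy : IsRelPrime x y) (hz : ∀ r, z * r ∈ Ideal.span {x, y} → r ∈ Ideal.span {x, y}) {s : M}
    (hxs : x • s ∈ LinearMap.range g) (hys : y • s ∈ LinearMap.range g)
    (hzs : z • s ∈ LinearMap.range g) : s ∈ LinearMap.range g := by
  obtain ⟨q₁, hq₁⟩ := hxs
  obtain ⟨q₂, hq₂⟩ := hys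
  obtain ⟨q₃, hq₃⟩ := hzs
  obtain ⟨c₁₂, hc₁₂⟩ := (hfg (y • q₁ - x • q₂)).1 (by simp [hq₁, hq₂, smul_comm x y])
  obtain ⟨c₁₃, hc₁₃⟩ := (hfg (z • q₁ - x • q₃)).1 (by simp [hq₁, hq₃, smul_comm x z])
  obtain ⟨c₂₃, hc₂₃⟩ := (hfg (z • q₂ - y • q₃)).1 (by simp [hq₂, hq₃, smul_comm y z])
  have hcocycle : x • -c₂₃ + y • c₁₃ = z • c₁₂ := hf <| by
    simp only [map_add, map_smul, map_neg, hc₁₂, hc₁₃, hc₂₃]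
    module
  obtain ⟨d, e, rfl⟩ := exists_smul_add_smul_of_smul_add_smul_eq_smul hz hcocycle
  have hcorrected : x • (q₂ + f d) = y • (q₁ - f e) := by
    simp only [map_add, map_smul] at hc₁₂
    linear_combination (norm := module) hc₁₂
  obtain ⟨r, hr⟩ := exists_eq_smul_of_smul_eq_smul hxy hcorrected
  refine ⟨r, smul_right_injective M hx ?_⟩
  beta_reduce
  rw [← map_smul, ← hr, map_sub, hfg.apply_apply_eq_zero, sub_zero, hq₁]

open Matrix

/-- Exactness of the Buchsbaum–Rim complex. -/
theorem exists_borderedMinors_mulVec_eq_of_mem_minorIdeal {n : ℕ}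
    {Φ : Matrix (Fin n) (Fin (n + 2)) R}
    (hx : x ∈ minorIdeal Φ) (hy : y ∈ minorIdeal Φ) (hz : z ∈ minorIdeal Φ) (hx0 : x ≠ 0)
    (hxy : IsRelPrime x y) (hxyz : ∀ r, z * r ∈ Ideal.span {x, y} → r ∈ Ideal.span {x, y})
    {s : Fin (n + 2) → R} (hs : Φ *ᵥ s = 0) : ∃ q, borderedMinors Φ *ᵥ q = s := by
  have hinj : Function.Injective (vecMulLinear Φ) :=
    (injective_iff_map_eq_zero _).2 fun c hc =>
      (smul_eq_zero.1 (smul_eq_zero_of_mem_minorIdeal hx hc)).resolve_left hx0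
  have hexact : Function.Exact (vecMulLinear Φ) (mulVecLin (borderedMinors Φ)) := fun r =>
    ⟨fun hr => mem_range_of_smul_mem_range hinj hx0 hxy
        (smul_mem_range_vecMulLinear hx hr) (smul_mem_range_vecMulLinear hy hr),
      by rintro ⟨c, rfl⟩; exact borderedMinors_mulVec_vecMul Φ c⟩
  exact mem_range_of_smul_mem_range_of_exact hinj hexact hx0 hxy hxyz
    (smul_mem_range_borderedMinors hx hs) (smul_mem_range_borderedMinors hy hs)
    (smul_mem_range_borderedMinors hz hs)

end Acyclicity

section Graded

open Matrix

variable {R σ τ I J G : Type*} [CommRing R] [AddCommGroup G] {w : σ → G}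

/-- `v` is homogeneous of degree `d` as an element of `⊕ i, S(-a i)`, where `S` is the polynomial
ring graded by `w`. -/
def IsHomogeneousVec (w : σ → G) (a : I → G) (v : I → MvPolynomial σ R) (d : G) : Prop :=
  ∀ i, IsWeightedHomogeneous w (v i) (d - a i)

/-- `M` describes a map `⊕ i, S(-a i) → ⊕ j, S(-b j)` of degree zero, where `S` is the polynomial
ring graded by `w`. -/
def IsHomogeneousMatrix (w : σ → G) (a : I → G) (b : J → G) (M : Matrix J I (MvPolynomial σ R)) :
    Prop :=
  ∀ j i, IsWeightedHomogeneous w (M j i) (a i - b j)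

lemma weightedHomogeneousComponent_mul {p : MvPolynomial σ R} {c : G}
    (hp : IsWeightedHomogeneous w p c) (f : MvPolynomial σ R) (d : G) :
    weightedHomogeneousComponent w d (p * f) = p * weightedHomogeneousComponent w (d - c) f := by
  classical
  let := weightedGradedAlgebra R w
  have h := DirectSum.coe_decompose_mul_add_of_left_mem (weightedHomogeneousSubmodule R w)
    (j := d - c) (b := f) ((mem_weightedHomogeneousSubmodule R w c p).2 hp)
  rw [add_sub_cancel] at h
  exact (decompose'_apply R w _ _).symm.trans (h.trans congr(p * $(decompose'_apply R w _ _)))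

lemma IsHomogeneousMatrix.mulVec_weightedHomogeneousComponent [Fintype I] {a : I → G} {b : J → G}
    {M : Matrix J I (MvPolynomial σ R)} (hM : IsHomogeneousMatrix w a b M)
    (f : I → MvPolynomial σ R) (d : G) :
    M *ᵥ (fun i => weightedHomogeneousComponent w (d - a i) (f i)) =
      fun j => weightedHomogeneousComponent w (d - b j) ((M *ᵥ f) j) := by
  funext j
  simp only [mulVec, dotProduct, map_sum, weightedHomogeneousComponent_mul (hM j _),
    sub_sub_sub_cancel_right]

lemma IsHomogeneousMatrix.exists_mulVec_eq [Fintype I] {a : I → G} {b : J → G}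
    {M : Matrix J I (MvPolynomial σ R)} (hM : IsHomogeneousMatrix w a b M) {d : G}
    {g : J → MvPolynomial σ R} (hg : IsHomogeneousVec w b g d) {f : I → MvPolynomial σ R}
    (hf : M *ᵥ f = g) : ∃ f', IsHomogeneousVec w a f' d ∧ M *ᵥ f' = g := by
  refine ⟨fun i => weightedHomogeneousComponent w (d - a i) (f i),
    fun i => weightedHomogeneousComponent_isWeightedHomogeneous (d - a i) (f i), ?_⟩
  rw [hM.mulVec_weightedHomogeneousComponent, hf]
  exact funext fun j => (hg j).weightedHomogeneousComponent_same

lemma IsHomogeneousMatrix.det [Fintype I] [DecidableEq I] {a b : I → G}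
    {M : Matrix I I (MvPolynomial σ R)} (hM : IsHomogeneousMatrix w a b M) :
    IsWeightedHomogeneous w M.det (∑ i, a i - ∑ i, b i) := by
  rw [← mem_weightedHomogeneousSubmodule, det_apply]
  refine sum_mem fun τ _ => Submodule.smul_of_tower_mem _ (τ.sign : ℤ) ?_
  have hprod := IsWeightedHomogeneous.prod Finset.univ (fun i => M (τ i) i)
    (fun i => a i - b (τ i)) fun i _ => hM (τ i) i
  rwa [Finset.sum_sub_distrib, Equiv.sum_comp τ b] at hprod

lemma IsHomogeneousMatrix.vecCons {n : ℕ} {a : I → G} {b : Fin n → G} {d : G}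
    {M : Matrix (Fin n) I (MvPolynomial σ R)} {q : I → MvPolynomial σ R}
    (hq : ∀ i, IsWeightedHomogeneous w (q i) (a i - d)) (hM : IsHomogeneousMatrix w a b M) :
    IsHomogeneousMatrix w a (vecCons d b) (of (vecCons q M)) :=
  Fin.cases hq hM

lemma isWeightedHomogeneous_single_one [DecidableEq I] (a : I → G) (i i' : I) :
    IsWeightedHomogeneous w ((Pi.single i 1 : I → MvPolynomial σ R) i') (a i' - a i) := by
  by_cases h : i' = i
  · subst h
    rw [Pi.single_eq_same, sub_self]
    exact isWeightedHomogeneous_one R w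
  · rw [Pi.single_eq_of_ne h]
    exact isWeightedHomogeneous_zero R w _

lemma IsHomogeneousMatrix.borderedMinors {n : ℕ} {a : Fin (n + 2) → G} {b : Fin n → G}
    {Φ : Matrix (Fin n) (Fin (n + 2)) (MvPolynomial σ R)} (hΦ : IsHomogeneousMatrix w a b Φ) :
    IsHomogeneousMatrix w (fun j => ∑ i, a i - ∑ j, b j - a j) a (borderedMinors Φ) := by
  intro i j
  have hdet := (IsHomogeneousMatrix.vecCons (isWeightedHomogeneous_single_one a i)
    (hΦ.vecCons (isWeightedHomogeneous_single_one a j))).det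
  convert! hdet using 1
  simp only [Fin.sum_univ_succ, cons_val_zero, cons_val_succ]
  abel

lemma isWeightedHomogeneous_aeval {w' : τ → G} {g : σ → MvPolynomial τ R}
    (hg : ∀ i, IsWeightedHomogeneous w' (g i) (w i)) {p : MvPolynomial σ R} {d : G}
    (hp : IsWeightedHomogeneous w p d) : IsWeightedHomogeneous w' (aeval g p) d := by
  rw [aeval_def, eval₂_eq]
  refine IsWeightedHomogeneous.sum _ _ _ fun u hu => ?_
  have hprod := IsWeightedHomogeneous.prod u.support (fun i => g i ^ u i) (fun i => u i • w i)
    fun i _ => (hg i).pow (u i)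
  rw [← hp (mem_support_iff.1 hu), Finsupp.weight_apply, Finsupp.sum]
  exact hprod.C_mul _

end Graded

section Monomials

variable {R σ : Type*} [CommRing R]

lemma weight_one_int (u : σ →₀ ℕ) : Finsupp.weight (1 : σ → ℤ) u = u.degree := by
  simp [Finsupp.weight_apply, Finsupp.degree_apply, Finsupp.sum]

lemma isWeightedHomogeneous_one_iff_isHomogeneous {p : MvPolynomial σ R} {d : ℕ} :
    IsWeightedHomogeneous (1 : σ → ℤ) p d ↔ p.IsHomogeneous d := by
  simp only [IsHomogeneous, IsWeightedHomogeneous, weight_one_int, Nat.cast_inj,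
    ← Pi.one_def, Finsupp.degree_eq_weight_one]

lemma eq_zero_of_isWeightedHomogeneous_of_neg {p : MvPolynomial σ R} {d : ℤ}
    (hp : IsWeightedHomogeneous (1 : σ → ℤ) p d) (hd : d < 0) : p = 0 :=
  hp.eq_zero_of_no_monomials fun u => by
    rw [weight_one_int]
    omega

lemma exists_isHomogeneous_of_isWeightedHomogeneous {p : MvPolynomial σ R} {d : ℤ}
    (hp : IsWeightedHomogeneous (1 : σ → ℤ) p d) (hp0 : p ≠ 0) :
    ∃ k : ℕ, d = k ∧ p.IsHomogeneous k := by
  lift d to ℕ using not_lt.1 fun hd => hp0 (eq_zero_of_isWeightedHomogeneous_of_neg hp hd)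
  exact ⟨d, rfl, isWeightedHomogeneous_one_iff_isHomogeneous.1 hp⟩

lemma IsHomogeneousVec.exists_isHomogeneous {I : Type*} {a : I → ℤ} {s : I → MvPolynomial σ R}
    {e : ℤ} (hs : IsHomogeneousVec 1 a s e) (i : I) : ∃ k : ℕ, (s i).IsHomogeneous k := by
  by_cases hi : s i = 0
  · exact ⟨0, hi ▸ isHomogeneous_zero σ R 0⟩
  · obtain ⟨k, -, hk⟩ := exists_isHomogeneous_of_isWeightedHomogeneous (hs i) hi
    exact ⟨k, hk⟩

lemma mem_span_X_pow_pair_iff {i j : σ} {A B : ℕ} {p : MvPolynomial σ R} :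
    p ∈ Ideal.span {X i ^ A, X j ^ B} ↔ ∀ u ∈ p.support, A ≤ u i ∨ B ≤ u j := by
  rw [X_pow_eq_monomial, X_pow_eq_monomial, ← Set.image_pair fun u => monomial u (1 : R),
    mem_ideal_span_monomial_image]
  simp

lemma mem_span_X_pow_pair_of_X_pow_mul_mem {i j k : σ} (hki : k ≠ i) (hkj : k ≠ j) {A B N : ℕ}
    {p : MvPolynomial σ R} (h : X k ^ N * p ∈ Ideal.span {X i ^ A, X j ^ B}) :
    p ∈ Ideal.span {X i ^ A, X j ^ B} := by
  rw [mem_span_X_pow_pair_iff] at h ⊢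
  intro u hu
  have hN := h (Finsupp.single k N + u) (by
    rwa [mem_support_iff, X_pow_eq_monomial, coeff_monomial_mul, one_mul, ← mem_support_iff])
  simpa [Finsupp.single_apply, hki, hkj] using hN

lemma mem_span_X_pow_pair_of_isWeightedHomogeneous {A B : ℕ} {d : ℤ} (hd : A + B ≤ d + 1)
    {p : MvPolynomial (Fin 2) R} (hp : IsWeightedHomogeneous 1 p d) :
    p ∈ Ideal.span {X 0 ^ A, X 1 ^ B} := by
  rw [mem_span_X_pow_pair_iff]
  intro u hu
  have hweight := hp (mem_support_iff.1 hu)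
  rw [weight_one_int, Finsupp.degree_eq_sum, Fin.sum_univ_two] at hweight
  omega

lemma isRelPrime_X_pow [IsDomain R] [UniqueFactorizationMonoid R] {i j : σ} (hij : i ≠ j)
    (A B : ℕ) :
    IsRelPrime (X i ^ A : MvPolynomial σ R) (X j ^ B) := by
  refine IsRelPrime.pow ?_
  rw [X_prime.irreducible.isRelPrime_iff_not_dvd, X_dvd_X]
  exact hij

end Monomials

section Socle

open Matrix

lemma IsHomogeneousVec.smul {R σ I G : Type*} [CommRing R] [AddCommGroup G] {w : σ → G} {a : I → G}
    {d e : G} {p : MvPolynomial σ R} (hp : IsWeightedHomogeneous w p e)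
    {v : I → MvPolynomial σ R} (hv : IsHomogeneousVec w a v d) :
    IsHomogeneousVec w a (R := R) (p • v) (e + d) := fun i => by
  rw [add_sub_assoc]
  exact hp.mul (hv i)

lemma IsHomogeneousVec.exists_smul_eq {R σ I G : Type*} [CommRing R] [AddCommGroup G] {w : σ → G}
    {a : I → G} {d e : G} {s v : I → MvPolynomial σ R} (hs : IsHomogeneousVec w a s e)
    (hv : IsHomogeneousVec w a v d) {c : MvPolynomial σ R} (hc : c • s = v) :
    ∃ c' : MvPolynomial σ R, IsWeightedHomogeneous w c' (d - e) ∧ c' • s = v := by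
  have hmul (c : MvPolynomial σ R) : replicateCol Unit s *ᵥ (fun _ : Unit => c) = c • s := by
    ext1 i
    simp [mulVec, dotProduct, mul_comm]
  obtain ⟨c', hc', h⟩ := IsHomogeneousMatrix.exists_mulVec_eq (a := fun _ : Unit => e)
    (M := replicateCol Unit s) (fun i _ => hs i) hv ((hmul c).trans hc)
  exact ⟨c' (), hc' (), (hmul (c' ())).symm.trans h⟩

variable {K I J : Type*} [Field K] [Fintype I] {Ψ : Matrix J I (MvPolynomial (Fin 2) K)}
  {a : I → ℤ} {b : J → ℤ} {s : I → MvPolynomial (Fin 2) K} {e D : ℤ}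

/-- If `u i` lifts `X i • g`, then `X 1 • u 0 - X 0 • u 1 = c • s` with `c` of degree
`D + 2 - e > 0`, so `c` lies in the ideal `(X 0, X 1)`. Subtracting multiples of `s` from the `u i`
makes the right-hand side vanish, and then `u i = X i • x` for a common `x`. -/
lemma exists_mulVec_eq_of_X_smul (hΨ : IsHomogeneousMatrix 1 a b Ψ) (hs : IsHomogeneousVec 1 a s e)
    (hΨs : Ψ *ᵥ s = 0) (hker : ∀ v, Ψ *ᵥ v = 0 → ∃ c : MvPolynomial (Fin 2) K, c • s = v)
    (hD : e - 1 ≤ D) {g : J → MvPolynomial (Fin 2) K} (hg : IsHomogeneousVec 1 b g D)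
    (hX : ∀ i, ∃ u, Ψ *ᵥ u = (X i : MvPolynomial (Fin 2) K) • g) : ∃ u, Ψ *ᵥ u = g := by
  have hlift (i : Fin 2) : ∃ u, IsHomogeneousVec 1 a u (1 + D) ∧
      Ψ *ᵥ u = (X i : MvPolynomial (Fin 2) K) • g :=
    (hX i).elim fun u hu =>
      hΨ.exists_mulVec_eq (hg.smul (isWeightedHomogeneous_X K (1 : Fin 2 → ℤ) i)) hu
  choose u hu hΨu using hlift
  have hsyz : Ψ *ᵥ ((X 1 : MvPolynomial (Fin 2) K) • u 0 - (X 0 : MvPolynomial (Fin 2) K) • u 1) =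
      0 := by
    rw [mulVec_sub, mulVec_smul, mulVec_smul, hΨu, hΨu, smul_comm, sub_self]
  have hsyzdeg : IsHomogeneousVec 1 a
      ((X 1 : MvPolynomial (Fin 2) K) • u 0 - (X 0 : MvPolynomial (Fin 2) K) • u 1)
      (1 + (1 + D)) := fun i =>
    ((hu 0).smul (isWeightedHomogeneous_X K (1 : Fin 2 → ℤ) 1) i).sub
      ((hu 1).smul (isWeightedHomogeneous_X K (1 : Fin 2 → ℤ) 0) i)
  obtain ⟨c, hc⟩ := hker _ hsyz
  obtain ⟨c, hcdeg, hc⟩ := hs.exists_smul_eq hsyzdeg hc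
  obtain ⟨c₀, c₁, rfl⟩ := Ideal.mem_span_pair.1
    (mem_span_X_pow_pair_of_isWeightedHomogeneous (A := 1) (B := 1) (by omega) hcdeg)
  rw [pow_one, pow_one] at hc
  obtain ⟨x, hx⟩ := exists_eq_smul_of_smul_eq_smul (x := X 0) (y := X 1) (u := u 1 + c₀ • s)
    (v := u 0 - c₁ • s) (by simpa using isRelPrime_X_pow (R := K) (zero_ne_one (α := Fin 2)) 1 1)
    (by linear_combination (norm := module) hc)
  refine ⟨x, smul_right_injective _ (X_ne_zero (R := K) (0 : Fin 2)) ?_⟩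
  beta_reduce
  rw [← mulVec_smul, ← hx, mulVec_sub, mulVec_smul, hΨs, smul_zero, sub_zero, hΨu]

lemma exists_mulVec_eq_of_sub_one_le (hΨ : IsHomogeneousMatrix 1 a b Ψ)
    (hs : IsHomogeneousVec 1 a s e) (hΨs : Ψ *ᵥ s = 0)
    (hker : ∀ v, Ψ *ᵥ v = 0 → ∃ c : MvPolynomial (Fin 2) K, c • s = v) {E : ℤ}
    (hE : ∀ D, E ≤ D → ∀ g, IsHomogeneousVec 1 b g D → ∃ u, Ψ *ᵥ u = g)
    (hD : e - 1 ≤ D) {g : J → MvPolynomial (Fin 2) K} (hg : IsHomogeneousVec 1 b g D) :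
    ∃ u, Ψ *ᵥ u = g := by
  obtain hED | hDE := le_total E D
  · exact hE D hED g hg
  · induction D, hDE using Int.leInductionDown generalizing g with
    | base => exact hE E le_rfl g hg
    | pred D _ ih =>
      refine exists_mulVec_eq_of_X_smul hΨ hs hΨs hker hD hg fun i => ih (by omega) ?_
      simpa using hg.smul (isWeightedHomogeneous_X K (1 : Fin 2 → ℤ) i)

end Socle

section Line

open Matrix

variable {R : Type*} [CommRing R] {n : ℕ} {Φ : Matrix (Fin n) (Fin (n + 2)) R}
  {q : Fin (n + 2) → R} {t : R}

lemma vecCons_mulVec_eq_zero_iff {v : Fin (n + 2) → R} :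
    of (vecCons q Φ) *ᵥ v = 0 ↔ q ⬝ᵥ v = 0 ∧ Φ *ᵥ v = 0 :=
  funext_iff.trans (Fin.forall_fin_succ.trans (and_congr Iff.rfl funext_iff.symm))

lemma vecCons_mulVec_borderedMinors_mulVec (Φ : Matrix (Fin n) (Fin (n + 2)) R)
    (q : Fin (n + 2) → R) : of (vecCons q Φ) *ᵥ (borderedMinors Φ *ᵥ q) = 0 :=
  vecCons_mulVec_eq_zero_iff.2 ⟨(dotProduct_borderedMinors_mulVec Φ q q).trans
    (borderedDet_self Φ q), mulVec_borderedMinors_mulVec Φ q⟩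

lemma exists_vecCons_mulVec_eq_smul (ht : t ∈ Ideal.span (Set.range (borderedMinors Φ *ᵥ q)))
    (u : Fin (n + 1) → R) : ∃ x, of (vecCons q Φ) *ᵥ x = t • u := by
  obtain ⟨p, rfl⟩ := Ideal.mem_span_range_iff_exists_fun.1 ht
  simpa only [← dotProduct_borderedMinors_mulVec, dotProduct] using
    exists_vecCons_mulVec_eq_borderedDet_smul Φ p q u

lemma exists_smul_eq_of_vecCons_mulVec_eq_zero [IsDomain R] [DecompositionMonoid R] {x y : R}
    (hx0 : x ≠ 0) (hxy : IsRelPrime x y)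
    (hx : x ∈ Ideal.span (Set.range (borderedMinors Φ *ᵥ q)))
    (hy : y ∈ Ideal.span (Set.range (borderedMinors Φ *ᵥ q))) {v : Fin (n + 2) → R}
    (hv : of (vecCons q Φ) *ᵥ v = 0) : ∃ c : R, c • (borderedMinors Φ *ᵥ q) = v := by
  obtain ⟨hqv, hΦv⟩ := vecCons_mulVec_eq_zero_iff.1 hv
  have hs : borderedMinors Φ *ᵥ q ≠ 0 := by
    rintro hs
    simp [hs, hx0] at hx
  let f : (Unit → R) →ₗ[R] (Fin (n + 2) → R) :=
    (LinearMap.proj ()).smulRight (borderedMinors Φ *ᵥ q)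
  have hf : Function.Injective f := fun c c' h =>
    funext fun _ => smul_left_injective R hs h
  have hmul {t : R} (ht : t ∈ Ideal.span (Set.range (borderedMinors Φ *ᵥ q))) :
      t • v ∈ LinearMap.range f := by
    obtain ⟨p, rfl⟩ := Ideal.mem_span_range_iff_exists_fun.1 ht
    exact ⟨fun _ => p ⬝ᵥ v, (dotProduct_smul_eq_of_mulVec_eq_zero hΦv hqv p).symm⟩
  obtain ⟨c, hc⟩ := mem_range_of_smul_mem_range hf hx0 hxy (hmul hx) (hmul hy)
  exact ⟨c (), hc⟩

theorem exists_vecCons_mulVec_eq_of_sub_one_le {K : Type*} [Field K] {a : Fin (n + 2) → ℤ}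
    {b : Fin n → ℤ} {e D : ℤ} {Φ : Matrix (Fin n) (Fin (n + 2)) (MvPolynomial (Fin 2) K)}
    {q : Fin (n + 2) → MvPolynomial (Fin 2) K} (hΦ : IsHomogeneousMatrix 1 a b Φ)
    (hq : ∀ i, IsWeightedHomogeneous (1 : Fin 2 → ℤ) (q i) (a i - (∑ i, a i - ∑ j, b j - e)))
    (hX : ∀ i, X i ∈ (Ideal.span (Set.range (borderedMinors Φ *ᵥ q))).radical) (hD : e - 1 ≤ D)
    {g : Fin (n + 1) → MvPolynomial (Fin 2) K}
    (hg : IsHomogeneousVec 1 (vecCons (∑ i, a i - ∑ j, b j - e) b) g D) :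
    ∃ u, of (vecCons q Φ) *ᵥ u = g := by
  obtain ⟨A, hA⟩ := hX 0
  obtain ⟨B, hB⟩ := hX 1
  have hs : IsHomogeneousVec 1 a (borderedMinors Φ *ᵥ q) e := by
    refine fun i => IsWeightedHomogeneous.sum _ _ _ fun j _ => ?_
    convert (hΦ.borderedMinors i j).mul (hq j) using 1
    ring
  have hker (v) (hv : of (vecCons q Φ) *ᵥ v = 0) :
      ∃ c : MvPolynomial (Fin 2) K, c • (borderedMinors Φ *ᵥ q) = v :=
    exists_smul_eq_of_vecCons_mulVec_eq_zero (pow_ne_zero A (X_ne_zero 0))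
      (isRelPrime_X_pow zero_ne_one A B) hA hB hv
  obtain ⟨E, hE⟩ := (Set.finite_range (vecCons (∑ i, a i - ∑ j, b j - e) b)).bddAbove
  refine exists_mulVec_eq_of_sub_one_le (hΦ.vecCons hq) hs
    (vecCons_mulVec_borderedMinors_mulVec Φ q) hker (E := E + A + B) (fun D hD g hg => ?_) hD hg
  have hmem (j) : g j ∈ Ideal.span {X 0 ^ A, X 1 ^ B} :=
    mem_span_X_pow_pair_of_isWeightedHomogeneous (by have := hE ⟨j, rfl⟩; omega) (hg j)
  choose g₀ g₁ hg₀₁ using fun j => Ideal.mem_span_pair.1 (hmem j)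
  obtain ⟨u₀, hu₀⟩ := exists_vecCons_mulVec_eq_smul hA g₀
  obtain ⟨u₁, hu₁⟩ := exists_vecCons_mulVec_eq_smul hB g₁
  refine ⟨u₀ + u₁, ?_⟩
  rw [mulVec_add, hu₀, hu₁, ← funext hg₀₁]
  ext1 j
  simp [mul_comm]

end Line

section HyperplaneRestriction

open Matrix

/-- The linear form with coefficients `c` in any finite set of variables; for three variables it is
`linform`. -/
noncomputable def linearForm {R σ : Type*} [CommRing R] [Fintype σ] (c : σ → R) :
    MvPolynomial σ R :=
  ∑ i, C (c i) * X i

variable {K : Type*} [Field K] {n : ℕ} {c : Fin (n + 1) → K}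

/-- Restriction to the hyperplane `linearForm c = 0`, on which the last coordinate is a linear
form in the others. This is the intended map only if `c (Fin.last n) ≠ 0`. -/
noncomputable def restrictHyperplane (c : Fin (n + 1) → K) :
    MvPolynomial (Fin (n + 1)) K →ₐ[K] MvPolynomial (Fin n) K :=
  aeval (Fin.snoc X (C (-(c (Fin.last n))⁻¹) * linearForm (c ∘ Fin.castSucc)))

lemma restrictHyperplane_X_castSucc (c : Fin (n + 1) → K) (i : Fin n) :
    restrictHyperplane c (X i.castSucc) = X i := by
  rw [restrictHyperplane, aeval_X, Fin.snoc_castSucc]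

lemma restrictHyperplane_X_last (c : Fin (n + 1) → K) :
    restrictHyperplane c (X (Fin.last n)) =
      C (-(c (Fin.last n))⁻¹) * linearForm (c ∘ Fin.castSucc) := by
  rw [restrictHyperplane, aeval_X, Fin.snoc_last]

lemma restrictHyperplane_rename_castSucc (c : Fin (n + 1) → K) (p : MvPolynomial (Fin n) K) :
    restrictHyperplane c (rename Fin.castSucc p) = p := by
  rw [restrictHyperplane, aeval_rename]
  convert! aeval_X_left_apply p
  funext i
  exact Fin.snoc_castSucc ..

lemma linearForm_eq_rename_add (c : Fin (n + 1) → K) :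
    linearForm c =
      rename Fin.castSucc (linearForm (c ∘ Fin.castSucc)) +
        C (c (Fin.last n)) * X (Fin.last n) := by
  simp [linearForm, Fin.sum_univ_castSucc]

lemma restrictHyperplane_linearForm (hc : c (Fin.last n) ≠ 0) :
    restrictHyperplane c (linearForm c) = 0 := by
  rw [linearForm_eq_rename_add, map_add, restrictHyperplane_rename_castSucc, map_mul,
    restrictHyperplane_X_last, algHom_C, algebraMap_eq, ← mul_assoc, ← C_mul]
  simp [hc]

lemma sub_rename_restrictHyperplane_mem (hc : c (Fin.last n) ≠ 0)
    (p : MvPolynomial (Fin (n + 1)) K) :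
    p - rename Fin.castSucc (restrictHyperplane c p) ∈ Ideal.span {linearForm c} := by
  rw [← Ideal.Quotient.mk_eq_mk_iff_sub_mem]
  suffices (Ideal.Quotient.mkₐ K (Ideal.span {linearForm c})) =
      (Ideal.Quotient.mkₐ K _).comp ((rename Fin.castSucc).comp (restrictHyperplane c)) from
    congr($this p)
  refine algHom_ext fun i => Fin.lastCases ?_ (fun i => ?_) i
  · refine (Ideal.Quotient.mk_eq_mk_iff_sub_mem _ _).2 (Ideal.mem_span_singleton'.2
      ⟨C (c (Fin.last n))⁻¹, ?_⟩)
    simp only [RingHom.coe_coe, AlgHom.comp_apply, restrictHyperplane_X_last,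
      linearForm_eq_rename_add c, map_mul, rename_C, map_neg, mul_add, ← mul_assoc, ← C_mul,
      inv_mul_cancel₀ hc, C_1]
    ring
  · simp [restrictHyperplane_X_castSucc]

lemma ker_restrictHyperplane (hc : c (Fin.last n) ≠ 0) :
    RingHom.ker (restrictHyperplane c) = Ideal.span {linearForm c} := by
  refine le_antisymm (fun p hp => ?_) ?_
  · simpa [(RingHom.mem_ker).1 hp] using sub_rename_restrictHyperplane_mem hc p
  · rw [Ideal.span_singleton_le_iff_mem]
    exact restrictHyperplane_linearForm hc

lemma restrictHyperplane_surjective (c : Fin (n + 1) → K) :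
    Function.Surjective (restrictHyperplane c) :=
  fun p => ⟨_, restrictHyperplane_rename_castSucc c p⟩

lemma isWeightedHomogeneous_linearForm {R σ : Type*} [CommRing R] [Fintype σ] (c : σ → R) :
    IsWeightedHomogeneous (1 : σ → ℤ) (linearForm c) 1 :=
  IsWeightedHomogeneous.sum _ _ _ fun i _ => (isWeightedHomogeneous_X R _ i).C_mul (c i)

lemma isWeightedHomogeneous_restrictHyperplane (c : Fin (n + 1) → K)
    {p : MvPolynomial (Fin (n + 1)) K} {d : ℤ} (hp : IsWeightedHomogeneous 1 p d) :
    IsWeightedHomogeneous 1 (restrictHyperplane c p) d := by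
  refine isWeightedHomogeneous_aeval (fun i => ?_) hp
  refine Fin.lastCases ?_ (fun i => ?_) i
  · rw [Fin.snoc_last]
    exact (isWeightedHomogeneous_linearForm _).C_mul _
  · rw [Fin.snoc_castSucc]
    exact isWeightedHomogeneous_X K _ i

end HyperplaneRestriction

section Lifting

open Matrix

variable {R S : Type*} [CommRing R] [CommRing S] {ρ : R →+* S} {ℓ : R}
  {n : ℕ} {Φ : Matrix (Fin n) (Fin (n + 2)) R} {q : Fin (n + 2) → R}

lemma exists_add_smul_eq_of_comp_eq_comp {I : Type*} (hker : RingHom.ker ρ = Ideal.span {ℓ})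
    {v w : I → R} (h : ρ ∘ w = ρ ∘ v) : ∃ x, w + ℓ • x = v := by
  have hmem (i) : v i - w i ∈ Ideal.span {ℓ} := by
    rw [← hker, RingHom.sub_mem_ker_iff]
    exact (congrFun h i).symm
  choose x hx using fun i => Ideal.mem_span_singleton'.1 (hmem i)
  exact ⟨x, funext fun i => by simp [mul_comm ℓ, hx]⟩

lemma map_mulVec_comp {I J : Type*} [Fintype I] (M : Matrix J I R) (v : I → R) :
    M.map ρ *ᵥ (ρ ∘ v) = ρ ∘ (M *ᵥ v) := by
  funext j
  exact (ρ.map_mulVec M v j).symm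

lemma exists_mulVec_eq_of_mulVec_eq_smul [IsDomain R] (hρ : Function.Surjective ρ)
    (hker : RingHom.ker ρ = Ideal.span {ℓ}) (hℓ : ℓ ≠ 0)
    (hline : ∀ v, of (vecCons (ρ ∘ q) (Φ.map ρ)) *ᵥ v = 0 →
      ∃ c : S, c • (borderedMinors (Φ.map ρ) *ᵥ (ρ ∘ q)) = v)
    {v : Fin (n + 2) → R} {g : Fin n → R} (hv : Φ *ᵥ v = ℓ • g) (hqv : q ⬝ᵥ v = 0) :
    ∃ x, Φ *ᵥ x = g := by
  have hρℓ : ρ ℓ = 0 := by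
    rw [← RingHom.mem_ker, hker]
    exact Ideal.mem_span_singleton_self ℓ
  have hρv : of (vecCons (ρ ∘ q) (Φ.map ρ)) *ᵥ (ρ ∘ v) = 0 := by
    refine vecCons_mulVec_eq_zero_iff.2 ⟨?_, ?_⟩
    · rw [← ρ.map_dotProduct, hqv, map_zero]
    · rw [map_mulVec_comp, hv]
      ext i
      simp [hρℓ]
  obtain ⟨c, hc⟩ := hline _ hρv
  obtain ⟨c, rfl⟩ := hρ c
  rw [← map_borderedMinors_mulVec] at hc
  obtain ⟨x, rfl⟩ := exists_add_smul_eq_of_comp_eq_comp hker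
    (w := c • (borderedMinors Φ *ᵥ q)) (v := v) (funext fun i => by simpa using congrFun hc i)
  rw [mulVec_add, mulVec_smul, mulVec_borderedMinors_mulVec, smul_zero, zero_add, mulVec_smul] at hv
  exact ⟨x, smul_right_injective _ hℓ hv⟩

lemma exists_mulVec_add_smul_eq (hρ : Function.Surjective ρ)
    (hker : RingHom.ker ρ = Ideal.span {ℓ}) {I J : Type*} [Fintype I] {M : Matrix J I R}
    {g : J → R} (h : ∃ v, M.map ρ *ᵥ v = ρ ∘ g) : ∃ v x, M *ᵥ v + ℓ • x = g := by
  obtain ⟨v, hv⟩ := h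
  obtain ⟨v, rfl⟩ := hρ.comp_left v
  exact ⟨v, exists_add_smul_eq_of_comp_eq_comp hker ((map_mulVec_comp M v).symm.trans hv)⟩

end Lifting

section Primitive

open Matrix

variable {K σ I J : Type*} [Field K] [Fintype I] {Φ : Matrix J I (MvPolynomial σ K)}
  {a : I → ℤ} {b : J → ℤ} {s : I → MvPolynomial σ K} {e : ℤ}

lemma totalDegree_pos_of_prime {p : MvPolynomial σ K} (hp : Prime p) : 0 < p.totalDegree := by
  rw [pos_iff_ne_zero]
  intro h0
  rw [totalDegree_eq_zero_iff_eq_C] at h0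
  refine hp.not_isUnit ?_
  rw [h0] at hp ⊢
  exact (isUnit_iff_ne_zero.2 fun h => hp.ne_zero (by rw [h, C_0])).map C

lemma exists_isHomogeneousVec_lt_of_prime_dvd (hΦ : IsHomogeneousMatrix 1 a b Φ)
    (hs : IsHomogeneousVec 1 a s e) (hs0 : s ≠ 0) (hΦs : Φ *ᵥ s = 0) {p : MvPolynomial σ K}
    (hp : Prime p) (hdvd : ∀ i, p ∣ s i) :
    ∃ d < e, ∃ t ≠ 0, IsHomogeneousVec 1 a t d ∧ Φ *ᵥ t = 0 := by
  choose t ht using hdvd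
  obtain rfl : s = p • t := funext ht
  have hΦt : Φ *ᵥ t = 0 := by
    rw [mulVec_smul] at hΦs
    exact (smul_eq_zero.1 hΦs).resolve_left hp.ne_zero
  obtain ⟨i, hi⟩ := Function.ne_iff.1 (right_ne_zero_of_smul hs0)
  obtain ⟨u, hu⟩ := support_nonempty.2 hi
  obtain ⟨k, hk, hhom⟩ := exists_isHomogeneous_of_isWeightedHomogeneous (hs i)
    (mul_ne_zero hp.ne_zero hi)
  have hdeg : p.totalDegree + (t i).totalDegree = k := by
    rw [← totalDegree_mul_of_isDomain hp.ne_zero hi]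
    exact hhom.totalDegree (mul_ne_zero hp.ne_zero hi)
  have hpos := totalDegree_pos_of_prime hp
  have hule : u.degree ≤ (t i).totalDegree := by
    rw [Finsupp.degree_apply]
    exact le_totalDegree hu
  refine ⟨u.degree + a i, by omega, _, ?_,
    fun i' => weightedHomogeneousComponent_isWeightedHomogeneous (u.degree + a i - a i') (t i'), ?_⟩
  · intro h
    have hcoeff := congr(coeff u ($h i))
    rw [coeff_weightedHomogeneousComponent, weight_one_int, if_pos (by ring)] at hcoeff
    exact mem_support_iff.1 hu hcoeff
  · rw [hΦ.mulVec_weightedHomogeneousComponent, hΦt]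
    exact funext fun j => map_zero _

lemma two_le_height_of_forall_prime_not_le {R : Type*} [CommRing R] [IsDomain R]
    [UniqueFactorizationMonoid R] {J : Ideal R} (hJ : J ≠ ⊥)
    (hprime : ∀ p, Prime p → ¬ J ≤ Ideal.span {p}) : 2 ≤ J.height := by
  rw [Ideal.height_eq_inf_minimalPrimes]
  refine le_iInf₂ fun q hq => ?_
  have := hq.1.1
  obtain ⟨p, hpq, hp⟩ := Ideal.IsPrime.exists_mem_prime_of_ne_bot hq.1.1
    fun h => hJ (le_bot_iff.1 (h ▸ hq.1.2))
  have : (Ideal.span {p}).IsPrime := (Ideal.span_singleton_prime hp.ne_zero).2 hp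
  have hbot : ⊥ < Ideal.span {p} := by
    rw [bot_lt_iff_ne_bot, Ne, Ideal.span_singleton_eq_bot]
    exact hp.ne_zero
  have hlt : Ideal.span {p} < q := lt_of_le_of_ne ((Ideal.span_singleton_le_iff_mem q).2 hpq)
    fun h => hprime p hp (h ▸ hq.1.2)
  calc (2 : ℕ∞) = (⊥ : Ideal R).height + 1 + 1 := by
        rw [Ideal.height_bot, zero_add, one_add_one_eq_two]
    _ ≤ (Ideal.span {p}).height + 1 := by grw [Ideal.height_add_one_le_of_lt_of_isPrime hbot]
    _ ≤ q.height := Ideal.height_add_one_le_of_lt_of_isPrime hlt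

end Primitive

section GeneralHyperplane

attribute [local instance] MvPolynomial.gradedAlgebra

variable {K σ : Type*} [Field K]

lemma le_idealOfVars_of_isHomogeneous {Q : Ideal (MvPolynomial σ K)}
    (hQ : Q.IsHomogeneous (homogeneousSubmodule σ K)) (hQtop : Q ≠ ⊤) : Q ≤ idealOfVars σ K := by
  intro p hp
  rw [← pow_one (idealOfVars σ K), mem_pow_idealOfVars_iff']
  intro u hu
  obtain rfl : u = 0 := (Finsupp.degree_eq_zero_iff u).1 (Nat.lt_one_iff.1 hu)
  by_contra hp0
  have hconst := homogeneousComponent_mem_of_mem hQ hp 0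
  rw [homogeneousComponent_zero] at hconst
  exact hQtop (Q.eq_top_of_isUnit_mem hconst ((isUnit_iff_ne_zero.2 hp0).map C))

variable [Fintype σ]

lemma height_idealOfVars_le : (idealOfVars σ K).height ≤ Fintype.card σ := by
  have htop : idealOfVars σ K ≠ ⊤ := by
    rw [Ideal.ne_top_iff_one, ← C_1, ← pow_one (idealOfVars σ K), C_mem_pow_idealOfVars_iff]
    simp
  calc (idealOfVars σ K).height ≤ (idealOfVars σ K).spanFinrank :=
        Ideal.height_le_spanFinrank _ htop
    _ ≤ (Set.range (X : σ → MvPolynomial σ K)).ncard := by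
      exact_mod_cast Submodule.spanFinrank_span_le_ncard_of_finite (Set.finite_range _)
    _ ≤ Fintype.card σ := by
      rw [← Set.image_univ, ← Nat.card_eq_fintype_card, ← Set.ncard_univ]
      exact_mod_cast Set.ncard_image_le

lemma eq_idealOfVars_of_card_le_height {Q : Ideal (MvPolynomial σ K)} [Q.IsPrime]
    (hQ : Q.IsHomogeneous (homogeneousSubmodule σ K)) (hheight : Fintype.card σ ≤ Q.height) :
    Q = idealOfVars σ K := by
  refine (le_idealOfVars_of_isHomogeneous hQ Ideal.IsPrime.ne_top').eq_of_not_lt fun hlt => ?_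
  exact (Ideal.height_strict_mono_of_isPrime hlt).not_ge (height_idealOfVars_le.trans hheight)

lemma X_mem_radical_sup_span_singleton {J : Ideal (MvPolynomial σ K)}
    (hJ : J.IsHomogeneous (homogeneousSubmodule σ K)) (hheight : Fintype.card σ ≤ J.height + 1)
    {ℓ : MvPolynomial σ K} {k : ℕ} (hℓ : ℓ.IsHomogeneous k)
    (hmin : ∀ p ∈ J.minimalPrimes, ℓ ∈ p → ∀ i, X i ∈ p) (i : σ) :
    X i ∈ (J ⊔ Ideal.span {ℓ}).radical := by
  rw [Ideal.radical_eq_sInf, Ideal.mem_sInf]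
  rintro Q ⟨hJQ, hQ⟩
  set Q' := (Q.homogeneousCore (homogeneousSubmodule σ K)).toIdeal
  have hQ'Q : Q' ≤ Q := Q.toIdeal_homogeneousCore_le _
  have hQ' : Q'.IsPrime := hQ.homogeneousCore
  have hJQ' : J ≤ Q' := by
    rw [← hJ.toIdeal_homogeneousCore_eq_self]
    exact Ideal.homogeneousCore_mono _ (le_sup_left.trans hJQ)
  have hℓQ' : ℓ ∈ Q' := Ideal.mem_homogeneousCore_of_homogeneous_of_mem
    ⟨k, (mem_homogeneousSubmodule k ℓ).2 hℓ⟩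
    (hJQ (Ideal.mem_sup_right (Ideal.mem_span_singleton_self ℓ)))
  obtain ⟨p, hp, hpQ'⟩ := Ideal.exists_minimalPrimes_le hJQ'
  have := hp.1.1
  by_cases hℓp : ℓ ∈ p
  · exact hQ'Q (hpQ' (hmin p hp hℓp i))
  have hlt : p < Q' := lt_of_le_of_ne hpQ' fun h => hℓp (h ▸ hℓQ')
  have hQ'vars : Q' = idealOfVars σ K := by
    refine eq_idealOfVars_of_card_le_height (HomogeneousIdeal.isHomogeneous _) ?_
    calc (Fintype.card σ : ℕ∞) ≤ J.height + 1 := hheight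
      _ ≤ p.height + 1 := by grw [hp.1.2]
      _ ≤ Q'.height := Ideal.height_add_one_le_of_lt_of_isPrime hlt
  exact hQ'Q (hQ'vars ▸ Ideal.subset_span ⟨i, rfl⟩)

lemma linearForm_single [DecidableEq σ] (i : σ) :
    linearForm (Pi.single i 1 : σ → K) = X i := by
  simp [linearForm, Pi.single_apply]

lemma eval_linearForm (c u : σ → K) : eval u (linearForm c) = ∑ i, c i * u i := by
  simp [linearForm]

lemma linearForm_ne_zero {c : σ → K} {i : σ} (hc : c i ≠ 0) : linearForm c ≠ 0 := by
  classical
  intro h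
  have heval := eval_linearForm c (Pi.single i 1)
  rw [h, map_zero] at heval
  simp [Pi.single_apply, hc.symm] at heval

lemma exists_eval_eq_zero_of_linearForm_mem {p : Ideal (MvPolynomial σ K)} {i : σ} (hi : X i ∉ p) :
    ∃ f : MvPolynomial σ K, f ≠ 0 ∧ ∀ c : σ → K, linearForm c ∈ p → eval c f = 0 := by
  classical
  let W : Submodule K (σ → K) :=
    (p.restrictScalars K).comap (Fintype.linearCombination K (X : σ → MvPolynomial σ K))
  have mem_W (c : σ → K) : c ∈ W ↔ linearForm c ∈ p := by
    simp [W, Fintype.linearCombination_apply, linearForm, smul_eq_C_mul]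
  have hW : W ≠ ⊤ := fun h => hi (by
    rw [← linearForm_single, ← mem_W, h]
    exact Submodule.mem_top)
  obtain ⟨f, hf0, hWf⟩ := W.exists_le_ker_of_lt_top (lt_top_iff_ne_top.2 hW)
  have heval (c : σ → K) : eval c (linearForm fun i => f (Pi.single i 1)) = f c := by
    rw [eval_linearForm, ← congrArg f (Finset.univ_sum_single c), map_sum]
    refine Finset.sum_congr rfl fun j _ => ?_
    rw [mul_comm, ← smul_eq_mul, ← map_smul, ← Pi.single_smul, smul_eq_mul, mul_one]
  refine ⟨linearForm fun i => f (Pi.single i 1), fun h => hf0 ?_, fun c hc => ?_⟩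
  · exact LinearMap.ext fun c => by rw [← heval, h, map_zero, LinearMap.zero_apply]
  · rw [heval]
    exact hWf ((mem_W c).2 hc)

lemma exists_X_mem_radical_sup_span_linearForm {J : Ideal (MvPolynomial σ K)}
    (hJ : J.IsHomogeneous (homogeneousSubmodule σ K)) (hheight : Fintype.card σ ≤ J.height + 1) :
    ∃ P : MvPolynomial σ K, P ≠ 0 ∧ ∀ c, eval c P ≠ 0 →
      ∀ i, X i ∈ (J ⊔ Ideal.span {linearForm c}).radical := by
  have hsep (p : Ideal (MvPolynomial σ K)) : ∃ f : MvPolynomial σ K, f ≠ 0 ∧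
      ∀ c, eval c f ≠ 0 → linearForm c ∈ p → ∀ i, X i ∈ p := by
    by_cases h : ∀ i, X i ∈ p
    · exact ⟨1, one_ne_zero, fun _ _ _ => h⟩
    · obtain ⟨i, hi⟩ := not_forall.1 h
      obtain ⟨f, hf0, hf⟩ := exists_eval_eq_zero_of_linearForm_mem hi
      exact ⟨f, hf0, fun c hc hcp => absurd (hf c hcp) hc⟩
  choose f hf0 hf using hsep
  have hfinite := J.finite_minimalPrimes_of_isNoetherianRing
  refine ⟨∏ p ∈ hfinite.toFinset, f p, Finset.prod_ne_zero_iff.2 fun p _ => hf0 p,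
    fun c hc => X_mem_radical_sup_span_singleton hJ hheight
      (isWeightedHomogeneous_one_iff_isHomogeneous.1 (isWeightedHomogeneous_linearForm c))
      fun p hp => hf p c ?_⟩
  rw [map_prod] at hc
  exact Finset.prod_ne_zero_iff.1 hc p (hfinite.mem_toFinset.2 hp)

end GeneralHyperplane

section Restriction

open Matrix

variable {K : Type*} [Field K]

attribute [local instance] MvPolynomial.gradedAlgebra in
lemma exists_X_mem_radical_restrictHyperplane {n : ℕ} {I : Type*}
    {s : I → MvPolynomial (Fin (n + 1)) K} (hs : ∀ i, ∃ k, (s i).IsHomogeneous k)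
    (hheight : n ≤ (Ideal.span (Set.range s)).height) :
    ∃ P : MvPolynomial (Fin (n + 1)) K, P ≠ 0 ∧ ∀ c, eval c P ≠ 0 → c (Fin.last n) ≠ 0 ∧
      ∀ i, X i ∈ (Ideal.span (Set.range (restrictHyperplane c ∘ s))).radical := by
  have hhom : (Ideal.span (Set.range s)).IsHomogeneous
      (homogeneousSubmodule (Fin (n + 1)) K) := by
    refine Ideal.homogeneous_span _ _ ?_
    rintro _ ⟨i, rfl⟩
    exact hs i
  obtain ⟨P, hP0, hP⟩ := exists_X_mem_radical_sup_span_linearForm hhom (by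
    rw [Fintype.card_fin, Nat.cast_add_one]
    gcongr)
  refine ⟨X (Fin.last n) * P, mul_ne_zero (X_ne_zero _) hP0, fun c hc => ?_⟩
  rw [map_mul, eval_X] at hc
  have hlast := left_ne_zero_of_mul hc
  refine ⟨hlast, fun i => ?_⟩
  obtain ⟨N, hN⟩ := hP c (right_ne_zero_of_mul hc) i.castSucc
  have hmap := Ideal.mem_map_of_mem (restrictHyperplane c) hN
  rw [Ideal.map_sup, Ideal.map_span, Ideal.map_span, Set.image_singleton,
    restrictHyperplane_linearForm hlast, Ideal.span_singleton_eq_bot.2 rfl, sup_bot_eq,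
    ← Set.range_comp, map_pow, restrictHyperplane_X_castSucc] at hmap
  exact ⟨N, hmap⟩

variable {n : ℕ} {a : Fin (n + 2) → ℤ} {b : Fin n → ℤ} {d e : ℤ}
  {Φ : Matrix (Fin n) (Fin (n + 2)) (MvPolynomial (Fin 3) K)}
  {q : Fin (n + 2) → MvPolynomial (Fin 3) K} {c : Fin 3 → K}

lemma exists_mulVec_eq_of_mulVec_eq_linearForm_smul (hΦ : IsHomogeneousMatrix 1 a b Φ)
    (hq : ∀ i, IsWeightedHomogeneous (1 : Fin 3 → ℤ) (q i) (a i - (∑ i, a i - ∑ j, b j - e)))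
    (hc : c (Fin.last 2) ≠ 0)
    (hX : ∀ i, X i ∈
      (Ideal.span (Set.range (restrictHyperplane c ∘ (borderedMinors Φ *ᵥ q)))).radical)
    (hd : d + e < ∑ i, a i - ∑ j, b j) {w : Fin n → MvPolynomial (Fin 3) K}
    (hw : IsHomogeneousVec 1 b w (d - 1)) {v : Fin (n + 2) → MvPolynomial (Fin 3) K}
    (hv : IsHomogeneousVec 1 a v d) (hΦv : Φ *ᵥ v = linearForm c • w) :
    ∃ x, IsHomogeneousVec 1 a x (d - 1) ∧ Φ *ᵥ x = w := by
  have hqv : q ⬝ᵥ v = 0 := by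
    refine eq_zero_of_isWeightedHomogeneous_of_neg
      (d := d - (∑ i, a i - ∑ j, b j - e)) (IsWeightedHomogeneous.sum _ _ _ fun i _ => ?_)
      (by omega)
    convert! (hq i).mul (hv i) using 1
    ring
  let ρ : MvPolynomial (Fin 3) K →+* MvPolynomial (Fin 2) K := restrictHyperplane c
  have hρs : ρ ∘ (borderedMinors Φ *ᵥ q) = borderedMinors (Φ.map ρ) *ᵥ (ρ ∘ q) :=
    map_borderedMinors_mulVec ..
  obtain ⟨A, hA⟩ := hX 0
  obtain ⟨B, hB⟩ := hX 1
  obtain ⟨x, hx⟩ := exists_mulVec_eq_of_mulVec_eq_smul (ρ := ρ) (q := q)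
    (restrictHyperplane_surjective c) (ker_restrictHyperplane hc) (linearForm_ne_zero hc)
    (fun v hv => exists_smul_eq_of_vecCons_mulVec_eq_zero (pow_ne_zero A (X_ne_zero 0))
      (isRelPrime_X_pow zero_ne_one A B) (hρs ▸ hA) (hρs ▸ hB) hv) hΦv hqv
  exact hΦ.exists_mulVec_eq hw hx

lemma exists_mulVec_add_linearForm_smul_eq (hΦ : IsHomogeneousMatrix 1 a b Φ)
    (hq : ∀ i, IsWeightedHomogeneous (1 : Fin 3 → ℤ) (q i) (a i - (∑ i, a i - ∑ j, b j - e)))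
    (hc : c (Fin.last 2) ≠ 0)
    (hX : ∀ i, X i ∈
      (Ideal.span (Set.range (restrictHyperplane c ∘ (borderedMinors Φ *ᵥ q)))).radical)
    (hd : e - 1 ≤ d) {g : Fin n → MvPolynomial (Fin 3) K} (hg : IsHomogeneousVec 1 b g d) :
    ∃ v x, IsHomogeneousVec 1 a v d ∧ IsHomogeneousVec 1 b x (d - 1) ∧
      Φ *ᵥ v + linearForm c • x = g := by
  let ρ : MvPolynomial (Fin 3) K →+* MvPolynomial (Fin 2) K := restrictHyperplane c
  have hρs : ρ ∘ (borderedMinors Φ *ᵥ q) = borderedMinors (Φ.map ρ) *ᵥ (ρ ∘ q) :=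
    map_borderedMinors_mulVec ..
  have hline : ∃ u, of (vecCons (ρ ∘ q) (Φ.map ρ)) *ᵥ u = vecCons 0 (ρ ∘ g) := by
    refine exists_vecCons_mulVec_eq_of_sub_one_le (a := a) (b := b) (e := e) (D := d)
      (fun j i => isWeightedHomogeneous_restrictHyperplane c (hΦ j i))
      (fun i => isWeightedHomogeneous_restrictHyperplane c (hq i)) (hρs ▸ hX) hd ?_
    exact Fin.cases (isWeightedHomogeneous_zero _ _ _)
      fun j => isWeightedHomogeneous_restrictHyperplane c (hg j)
  obtain ⟨u, hu⟩ := hline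
  have hΦu : Φ.map ρ *ᵥ u = ρ ∘ g := congrArg vecTail hu
  obtain ⟨v, x, hvx⟩ := exists_mulVec_add_smul_eq (ρ := ρ) (M := Φ)
    (restrictHyperplane_surjective c) (ker_restrictHyperplane hc) ⟨u, hΦu⟩
  refine ⟨fun i => weightedHomogeneousComponent 1 (d - a i) (v i),
    fun j => weightedHomogeneousComponent 1 (d - 1 - b j) (x j),
    fun i => weightedHomogeneousComponent_isWeightedHomogeneous _ _,
    fun j => weightedHomogeneousComponent_isWeightedHomogeneous _ _, ?_⟩
  rw [hΦ.mulVec_weightedHomogeneousComponent]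
  funext j
  rw [Pi.add_apply, Pi.smul_apply, smul_eq_mul, sub_right_comm d,
    ← weightedHomogeneousComponent_mul (isWeightedHomogeneous_linearForm c), ← smul_eq_mul,
    ← map_add, ← (hg j).weightedHomogeneousComponent_same, ← hvx]
  rfl

end Restriction

section Cokernel

open Matrix

variable {K : Type*} [Field K] {n : ℕ} {a : Fin (n + 2) → ℤ} {b : Fin n → ℤ} {d e : ℤ}
  {Φ : Matrix (Fin n) (Fin (n + 2)) (MvPolynomial (Fin 3) K)}

lemma FiniteColength.X_mem_radical_minorIdeal (hfin : FiniteColength n a b Φ) (i : Fin 3) :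
    X i ∈ (minorIdeal Φ).radical := by
  obtain ⟨D, hD⟩ := hfin
  refine mem_radical_minorIdeal fun j => ?_
  have hdeg : (X i ^ (D - b j).toNat : MvPolynomial (Fin 3) K) • Pi.single j 1 ∈
      degPiece (K := K) n b ((D - b j).toNat + b j) := by
    refine mem_degPiece.2 fun j' => ?_
    have hX := ((isWeightedHomogeneous_X K (1 : Fin 3 → ℤ) i).pow (D - b j).toNat).mul
      (isWeightedHomogeneous_single_one (-b) j j')
    convert! hX using 1
    simp only [Int.ofNat_toNat, Pi.one_apply, Int.nsmul_eq_mul, mul_one, Pi.neg_apply,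
      sub_neg_eq_add]
    ring
  obtain ⟨u, -, hu⟩ := hD _ (by omega) hdeg
  exact ⟨_, u, hu⟩

lemma FiniteColength.exists_borderedMinors_mulVec_eq (hfin : FiniteColength n a b Φ)
    (hΦ : IsHomogeneousMatrix 1 a b Φ) {s : Fin (n + 2) → MvPolynomial (Fin 3) K}
    (hs : IsHomogeneousVec 1 a s e) (hΦs : Φ *ᵥ s = 0) :
    ∃ q : Fin (n + 2) → MvPolynomial (Fin 3) K,
      (∀ i, IsWeightedHomogeneous (1 : Fin 3 → ℤ) (q i) (a i - (∑ i, a i - ∑ j, b j - e))) ∧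
        borderedMinors Φ *ᵥ q = s := by
  obtain ⟨A, hA⟩ := hfin.X_mem_radical_minorIdeal 0
  obtain ⟨B, hB⟩ := hfin.X_mem_radical_minorIdeal 1
  obtain ⟨C, hC⟩ := hfin.X_mem_radical_minorIdeal 2
  obtain ⟨q, hq⟩ := exists_borderedMinors_mulVec_eq_of_mem_minorIdeal hA hB hC
    (pow_ne_zero A (X_ne_zero 0)) (isRelPrime_X_pow (by decide) A B)
    (fun r hr => mem_span_X_pow_pair_of_X_pow_mul_mem (by decide) (by decide) hr) hΦs
  obtain ⟨q', hq', hs'⟩ := hΦ.borderedMinors.exists_mulVec_eq hs hq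
  refine ⟨q', fun i => ?_, hs'⟩
  convert! hq' i using 1
  ring

lemma mulLmap_injective {c : Fin 3 → K}
    (h : ∀ w v, IsHomogeneousVec 1 b w (d - 1) → IsHomogeneousVec 1 a v d →
      Φ *ᵥ v = linearForm c • w → ∃ x, IsHomogeneousVec 1 a x (d - 1) ∧ Φ *ᵥ x = w) :
    Function.Injective (mulLmap n a b Φ (linform c) (homog_linform c) d) := by
  rw [← LinearMap.ker_eq_bot, LinearMap.ker_eq_bot']
  intro y hy
  obtain ⟨⟨w, hw⟩, rfl⟩ := Submodule.Quotient.mk_surjective _ y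
  obtain ⟨v, hv, hvw⟩ := (Submodule.Quotient.mk_eq_zero _).1 hy
  obtain ⟨x, hx, hxw⟩ := h w v (mem_degPiece.1 hw) (mem_degPiece.1 hv) hvw
  exact (Submodule.Quotient.mk_eq_zero _).2 ⟨x, mem_degPiece.2 hx, hxw⟩

lemma mulLmap_surjective {c : Fin 3 → K}
    (h : ∀ g, IsHomogeneousVec 1 b g d → ∃ v x, IsHomogeneousVec 1 a v d ∧
      IsHomogeneousVec 1 b x (d - 1) ∧ Φ *ᵥ v + linearForm c • x = g) :
    Function.Surjective (mulLmap n a b Φ (linform c) (homog_linform c) d) := by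
  intro y
  obtain ⟨⟨g, hg⟩, rfl⟩ := Submodule.Quotient.mk_surjective _ y
  obtain ⟨v, x, hv, hx, hvx⟩ := h g (mem_degPiece.1 hg)
  have hsub : phiK n Φ (-v) = linform c • x - g := by
    rw [map_neg, ← hvx]
    exact (sub_add_cancel_right _ _).symm
  exact ⟨Submodule.Quotient.mk ⟨x, mem_degPiece.2 hx⟩,
    (Submodule.Quotient.eq _).2 ⟨-v, neg_mem (mem_degPiece.2 hv), hsub⟩⟩

lemma exists_lt_Nd_ne_bot_of_prime_dvd (hΦ : IsHomogeneousMatrix 1 a b Φ)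
    {s : Fin (n + 2) → MvPolynomial (Fin 3) K} (hs : s ∈ Nd n a Φ e) (hs0 : s ≠ 0)
    {p : MvPolynomial (Fin 3) K} (hp : Prime p) (hdvd : ∀ i, p ∣ s i) :
    ∃ d < e, Nd n a Φ d ≠ ⊥ := by
  obtain ⟨d, hd, t, ht0, ht, hΦt⟩ :=
    exists_isHomogeneousVec_lt_of_prime_dvd hΦ (mem_degPiece.1 hs.1) hs0 hs.2 hp hdvd
  exact ⟨d, hd, (Submodule.ne_bot_iff _).2 ⟨t, ⟨mem_degPiece.2 ht, hΦt⟩, ht0⟩⟩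

lemma two_le_height_span_range_of_isLeast (hΦ : IsHomogeneousMatrix 1 a b Φ)
    (he : IsLeast {d | Nd n a Φ d ≠ ⊥} e) {s : Fin (n + 2) → MvPolynomial (Fin 3) K}
    (hs : s ∈ Nd n a Φ e) (hs0 : s ≠ 0) : 2 ≤ (Ideal.span (Set.range s)).height := by
  refine two_le_height_of_forall_prime_not_le ?_ fun p hp hle => ?_
  · rw [Ne, Ideal.span_eq_bot, Set.forall_mem_range]
    exact fun h => hs0 (funext h)
  · obtain ⟨d, hd, hNd⟩ := exists_lt_Nd_ne_bot_of_prime_dvd hΦ hs hs0 hp fun i =>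
      Ideal.mem_span_singleton.1 (hle (Ideal.subset_span (Set.mem_range_self i)))
    exact (he.2 hNd).not_gt hd

end Cokernel

theorem statement4_general {K : Type*} [Field K] (n : ℕ) (a : Fin (n + 2) → ℤ) (b : Fin n → ℤ)
    (Φ : Matrix (Fin n) (Fin (n + 2)) (MvPolynomial (Fin 3) K))
    (hΦ : ∀ j i, homog (Φ j i) (a i - b j)) (hfin : FiniteColength n a b Φ) {e : ℤ}
    (he : IsLeast {d | Nd n a Φ d ≠ ⊥} e) :
    ∃ P : MvPolynomial (Fin 3) K, P ≠ 0 ∧ ∀ c : Fin 3 → K, eval c P ≠ 0 →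
      (∀ d : ℤ, d + e < ∑ i, a i - ∑ j, b j →
        Function.Injective (mulLmap n a b Φ (linform c) (homog_linform c) d)) ∧
      (∀ d : ℤ, e - 1 ≤ d →
        Function.Surjective (mulLmap n a b Φ (linform c) (homog_linform c) d)) := by
  obtain ⟨s, hsN, hs0⟩ := (Submodule.ne_bot_iff _).1 he.1
  have hs : IsHomogeneousVec 1 a s e := mem_degPiece.1 hsN.1
  obtain ⟨q, hq, rfl⟩ := hfin.exists_borderedMinors_mulVec_eq hΦ hs hsN.2
  obtain ⟨P, hP0, hP⟩ := exists_X_mem_radical_restrictHyperplane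
    hs.exists_isHomogeneous (two_le_height_span_range_of_isLeast hΦ he hsN hs0)
  refine ⟨P, hP0, fun c hc => ⟨fun d hd => mulLmap_injective fun w v hw hv => ?_,
    fun d hd => mulLmap_surjective fun g hg => ?_⟩⟩
  · exact exists_mulVec_eq_of_mulVec_eq_linearForm_smul hΦ hq (hP c hc).1 (hP c hc).2 hd hw hv
  · exact exists_mulVec_add_linearForm_smul_eq hΦ hq (hP c hc).1 (hP c hc).2 hd hg

/-- If `a - b` is odd (`a - b = 2m + 1`) and `N_m ≠ 0` (the associated
normalized rank-2 bundle with `c₁ = -1` is unstable), and `k = max{ j : N_{m-j} ≠ 0 }` is the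
index of instability, then for a general linear form `L` the multiplication map
`×L : M_{d-1} → M_d` is injective for all `d ≤ m + k` and surjective for all
`d ≥ m - k - 1`. -/
theorem statement4 {K : Type*} [Field K] [IsAlgClosed K] [CharZero K]
    (n : ℕ) (a : Fin (n + 2) → ℤ) (b : Fin n → ℤ)
    (Φ : Matrix (Fin n) (Fin (n + 2)) (MvPolynomial (Fin 3) K))
    (hΦ : ∀ j i, homog (Φ j i) (a i - b j))
    (hfin : FiniteColength n a b Φ)
    (m : ℤ) (hm : (∑ i, a i) - (∑ j, b j) = 2 * m + 1)
    (hunstable : Nd n a Φ m ≠ ⊥)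
    (k : ℤ) (hk₁ : Nd n a Φ (m - k) ≠ ⊥) (hk₂ : ∀ j : ℤ, Nd n a Φ (m - j) ≠ ⊥ → j ≤ k) :
    ∃ P : MvPolynomial (Fin 3) K, P ≠ 0 ∧ ∀ c : Fin 3 → K, eval c P ≠ 0 →
      (∀ d : ℤ, d ≤ m + k →
        Function.Injective (mulLmap n a b Φ (linform c) (homog_linform c) d)) ∧
      (∀ d : ℤ, m - k - 1 ≤ d →
        Function.Surjective (mulLmap n a b Φ (linform c) (homog_linform c) d)) := by
  have hleast : IsLeast {d | Nd n a Φ d ≠ ⊥} (m - k) :=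
    ⟨hk₁, fun d hd => sub_le_comm.1 (hk₂ (m - d) (by rwa [sub_sub_cancel]))⟩
  obtain ⟨P, hP0, hP⟩ := statement4_general n a b Φ hΦ hfin hleast
  exact ⟨P, hP0, fun c hc => ⟨fun d hd => (hP c hc).1 d (by omega), (hP c hc).2⟩⟩
end

section
/- If F_1, F_2, F_3 are homogeneous polynomials of positive degree forming a regular sequence in R = K[x,y,z], then the Artinian graded algebra A = R/(F_1, F_2, F_3) has the Weak Lefschetz Property: there exists a linear form L ∈ R_1 such that multiplication ×L : A_d → A_{d+1} is injective or surjective for every d. -/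
open MvPolynomial

noncomputable section

variable {K : Type*} [Field K]

/-- The degree-`d` graded piece of `R = K[x,y,z]`, as a `K`-subspace. -/
def Rdeg (d : ℤ) : Submodule K (MvPolynomial (Fin 3) K) :=
  weightedHomogeneousSubmodule K (fun _ : Fin 3 => (1 : ℤ)) d

/-- The degree-`d` piece of the ideal `I`, inside the degree-`d` piece of `R`. -/
def IdealPiece (I : Ideal (MvPolynomial (Fin 3) K)) (d : ℤ) :
    Submodule K ↥(Rdeg (K := K) d) :=
  Submodule.comap (Rdeg (K := K) d).subtype (I.restrictScalars K)

/-- The degree-`d` graded piece of the graded algebra `A = R/I`. -/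
abbrev Ad (I : Ideal (MvPolynomial (Fin 3) K)) (d : ℤ) :=
  ↥(Rdeg (K := K) d) ⧸ IdealPiece I d

/-- Multiplication by `L` on `R`, as a `K`-linear map. -/
def mulScalar (L : MvPolynomial (Fin 3) K) :
    MvPolynomial (Fin 3) K →ₗ[K] MvPolynomial (Fin 3) K :=
  ((LinearMap.lsmul (MvPolynomial (Fin 3) K) (MvPolynomial (Fin 3) K)) L).restrictScalars K

lemma mulScalar_mem {L : MvPolynomial (Fin 3) K} (hL : homog L 1) {d : ℤ}
    {p : MvPolynomial (Fin 3) K} (hp : p ∈ Rdeg (K := K) (d - 1)) :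
    mulScalar L p ∈ Rdeg (K := K) d := by
  rw [Rdeg, mem_weightedHomogeneousSubmodule] at hp ⊢
  have h := hL.mul hp
  have e : (1 : ℤ) + (d - 1) = d := by ring
  rw [e] at h
  simpa [mulScalar, smul_eq_mul] using h

/-- The map induced by multiplication by `L` from `A_{d-1}` to `A_d`, where `A = R/I`. -/
def mulA (I : Ideal (MvPolynomial (Fin 3) K)) (L : MvPolynomial (Fin 3) K)
    (hL : homog L 1) (d : ℤ) : Ad I (d - 1) →ₗ[K] Ad I d :=
  Submodule.mapQ (IdealPiece I (d - 1)) (IdealPiece I d)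
    ((mulScalar L).restrict fun _ hp => mulScalar_mem hL hp)
    (by
      rintro ⟨p, hp⟩ hmem
      have hpI : p ∈ I := hmem
      show mulScalar L p ∈ Submodule.restrictScalars K I
      have : mulScalar L p = L * p := by simp [mulScalar, smul_eq_mul]
      rw [this]
      exact Ideal.mul_mem_left I L hpI)

/-!
Restrict everything to the lines `L = z - s x - t y = 0`, with `s` and `t` indeterminates. If `×L`
is not injective on `A` in degree `d - 1` for generic `(s, t)`, there is a form `G ∉ (F₀, F₁, F₂)`
with coefficients in `K[s, t]` such that `L G = ∑ Hᵢ Fᵢ`. The restriction `h` of `H` to the generic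
line is then a syzygy, of degree `d`, of the binary forms `fᵢ = Fᵢ(x, y, s x + t y)`. The derivation
`y ∂/∂s - x ∂/∂t` annihilates each `fᵢ`, so it maps `h` to a syzygy `h'` of degree `d + 1`.

If `h` and `h'` are linearly independent, two independent syzygies of such low degree
force `f₀, f₁, f₂` to generate all binary forms of degree `d` on a general line, that is,
`×L : A_{d-1} → A_d` is surjective. Otherwise `h × h' = 0`, the direction of `h` does not depend on
the line, and `h` is a multiple of the restriction of some `τ` with entries in `K[x, y, z]`. Then
`∑ τᵢ Fᵢ` vanishes on the generic line, hence identically, and `H` is congruent modulo `L` to a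
multiple of the syzygy `τ` of `F`. This gives `G ∈ (F₀, F₁, F₂)`, a contradiction.
-/

namespace WeakLefschetz

open scoped Matrix

section Forms

variable {σ R : Type*}

section CommSemiring

variable [CommSemiring R] {p q : MvPolynomial σ R} {m n : ℤ}

/-- Homogeneous polynomials of integer degree; as for `homog`, the only form of negative degree
is zero. -/
abbrev IsForm (p : MvPolynomial σ R) (n : ℤ) : Prop :=
  IsWeightedHomogeneous (fun _ => (1 : ℤ)) p n

lemma weight_one_eq_degree (m : σ →₀ ℕ) : Finsupp.weight (fun _ => (1 : ℤ)) m = m.degree := by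
  simp [Finsupp.weight_apply, Finsupp.degree_apply, Finsupp.sum]

lemma isForm_natCast {k : ℕ} : IsForm p k ↔ p.IsHomogeneous k := by
  refine forall₂_congr fun d _ => ?_
  rw [weight_one_eq_degree, Finsupp.degree_eq_weight_one, Nat.cast_inj]
  rfl

lemma IsForm.eq_zero_of_neg (hp : IsForm p n) (hn : n < 0) : p = 0 := by
  ext m
  refine hp.coeff_eq_zero m fun h => ?_
  rw [weight_one_eq_degree] at h
  omega

lemma IsForm.mul_of_add_eq {k : ℤ} (hp : IsForm p m) (hq : IsForm q n) (h : m + n = k) :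
    IsForm (p * q) k :=
  h ▸ hp.mul hq

lemma isForm_X (i : σ) : IsForm (X i : MvPolynomial σ R) 1 :=
  isWeightedHomogeneous_X _ _ _

lemma isForm_X_pow (i : σ) (k : ℕ) : IsForm (X i ^ k : MvPolynomial σ R) k :=
  isForm_natCast.2 (isHomogeneous_X_pow i k)

lemma IsForm.mem_pow_idealOfVars {k : ℕ} (hp : IsForm p n) (hk : k ≤ n) :
    p ∈ idealOfVars σ R ^ k := by
  refine (mem_pow_idealOfVars_iff k p).2 fun m hm => ?_
  have h := hp (mem_support_iff.1 hm)
  rw [weight_one_eq_degree] at h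
  omega

lemma IsForm.aeval_mul {S : Type*} [CommSemiring S] [Algebra R S] {k : ℕ} (hp : IsForm p k)
    (a : S) (x : σ → S) : aeval (fun i => a * x i) p = a ^ k * aeval x p := by
  simp only [aeval_def, eval₂_eq, Finset.mul_sum]
  refine Finset.sum_congr rfl fun m hm => ?_
  rw [← isForm_natCast.1 hp (mem_support_iff.1 hm)]
  simp only [mul_pow, Finset.prod_mul_distrib, Finset.prod_pow_eq_pow_sum]
  simp only [Finsupp.weight_apply, Finsupp.sum, Pi.one_apply, smul_eq_mul, mul_one]
  ring

lemma weightedHomogeneousComponent_mul {w : σ → ℤ} (hp : IsWeightedHomogeneous w p m) :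
    weightedHomogeneousComponent w n (q * p) = weightedHomogeneousComponent w (n - m) q * p := by
  let _ := weightedGradedAlgebra R w
  have h := DirectSum.coe_decompose_mul_add_of_right_mem (weightedHomogeneousSubmodule R w)
    (i := n - m) (a := q) hp
  rw [sub_add_cancel] at h
  exact (weightedDecomposition.decompose'_apply R w _ _).symm.trans
    (h.trans (congrArg (· * p) (weightedDecomposition.decompose'_apply R w _ _)))

lemma exists_isForm_coeffs {ι : Type*} [Fintype ι] {f : ι → MvPolynomial σ R} {e : ι → ℤ}
    (hf : ∀ i, IsForm (f i) (e i)) (hp : IsForm p n) (hmem : p ∈ Ideal.span (Set.range f)) :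
    ∃ c : ι → MvPolynomial σ R, (∀ i, IsForm (c i) (n - e i)) ∧ c ⬝ᵥ f = p := by
  obtain ⟨c, hc⟩ := Ideal.mem_span_range_iff_exists_fun.1 hmem
  refine ⟨fun i => weightedHomogeneousComponent _ (n - e i) (c i),
    fun i => weightedHomogeneousComponent_isWeightedHomogeneous _ _, ?_⟩
  rw [← hp.weightedHomogeneousComponent_same, ← hc, map_sum]
  exact Finset.sum_congr rfl fun i _ => (weightedHomogeneousComponent_mul (hf i)).symm

end CommSemiring

lemma IsForm.of_mul [CommRing R] [IsDomain R] {p q : MvPolynomial σ R} {m n : ℤ}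
    (hpq : IsForm (p * q) n) (hq : IsForm q m) (hq0 : q ≠ 0) : IsForm p (n - m) := by
  have h := weightedHomogeneousComponent_mul (n := n) (q := p) hq
  rw [hpq.weightedHomogeneousComponent_same] at h
  rw [mul_right_cancel₀ hq0 h]
  exact weightedHomogeneousComponent_isWeightedHomogeneous _ _

lemma IsForm.eq_zero_of_isUnit [Field R] {p : MvPolynomial σ R} {n : ℤ} (hp : IsForm p n)
    (h : IsUnit p) : n = 0 := by
  obtain ⟨c, -, rfl⟩ := isUnit_iff_eq_C_of_isReduced.1 h
  exact IsWeightedHomogeneous.inj_right h.ne_zero hp (isWeightedHomogeneous_C _ c)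

end Forms

section CrossProduct

variable {A : Type*} [CommRing A] {f u v w : Fin 3 → A}

lemma map_comp_cross {B : Type*} [CommRing B] (g : A →+* B) (u v : Fin 3 → A) :
    g ∘ (u ⨯₃ v) = (g ∘ u) ⨯₃ (g ∘ v) := by
  ext i
  fin_cases i <;> simp [cross_apply]

lemma cross_cross_eq_zero (hu : u ⬝ᵥ f = 0) (hv : v ⬝ᵥ f = 0) : u ⨯₃ v ⨯₃ f = 0 := by
  rw [cross_cross_eq_smul_sub_smul, hu, hv, zero_smul, zero_smul, sub_zero]

lemma dotProduct_smul_eq_of_cross_eq_zero (c : Fin 3 → A) (h : w ⨯₃ f = 0) :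
    (c ⬝ᵥ f) • w = (c ⬝ᵥ w) • f := by
  rw [← sub_eq_zero, dotProduct_comm c w, ← cross_cross_eq_smul_sub_smul', h, map_zero]

lemma exists_eq_smul_of_cross_eq_zero [IsDomain A] [DecompositionMonoid A] {a b : A}
    (ha : a ∈ Ideal.span (Set.range f)) (hb : b ∈ Ideal.span (Set.range f)) (ha0 : a ≠ 0)
    (hab : IsRelPrime a b) (h : w ⨯₃ f = 0) : ∃ g : A, w = g • f := by
  obtain ⟨c, rfl⟩ := Ideal.mem_span_range_iff_exists_fun.1 ha
  obtain ⟨c', rfl⟩ := Ideal.mem_span_range_iff_exists_fun.1 hb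
  change c ⬝ᵥ f ≠ 0 at ha0
  change IsRelPrime (c ⬝ᵥ f) (c' ⬝ᵥ f) at hab
  have hc := dotProduct_smul_eq_of_cross_eq_zero c h
  have hc' := dotProduct_smul_eq_of_cross_eq_zero c' h
  have hf : f ≠ 0 := by rintro rfl; exact ha0 (dotProduct_zero c)
  have hdvd : c ⬝ᵥ f ∣ (c' ⬝ᵥ f) * (c ⬝ᵥ w) := by
    refine ⟨c' ⬝ᵥ w, smul_left_injective A hf ?_⟩
    change ((c' ⬝ᵥ f) * (c ⬝ᵥ w)) • f = ((c ⬝ᵥ f) * (c' ⬝ᵥ w)) • f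
    rw [mul_smul, mul_smul, ← hc, ← hc', smul_comm]
  obtain ⟨g, hg⟩ := hab.dvd_of_dvd_mul_left hdvd
  refine ⟨g, smul_right_injective _ ha0 ?_⟩
  simp only [hc, hg, mul_smul]

lemma apply_smul_eq_of_cross_eq_zero (h : w ⨯₃ f = 0) (i : Fin 3) : f i • w = w i • f := by
  simpa only [single_one_dotProduct] using dotProduct_smul_eq_of_cross_eq_zero (Pi.single i 1) h

lemma cross_eq_zero_of_cross_eq_zero [IsDomain A] {y : Fin 3 → A} (hy : y ≠ 0)
    (hu : u ⨯₃ y = 0) (hv : v ⨯₃ y = 0) : u ⨯₃ v = 0 := by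
  obtain ⟨i, hi⟩ := Function.ne_iff.1 hy
  refine (smul_eq_zero.1 ?_).resolve_left (mul_ne_zero hi hi)
  have : (y i • u) ⨯₃ (y i • v) = 0 := by
    rw [apply_smul_eq_of_cross_eq_zero hu, apply_smul_eq_of_cross_eq_zero hv]; simp
  simpa [mul_smul] using this

lemma smul_eq_add_of_cross_eq_smul [IsDomain A] {η : Fin 3 → A} {g α β : A} (hg : g • f ≠ 0)
    (huv : u ⨯₃ v = g • f) (hα : η ⨯₃ v = α • f) (hβ : u ⨯₃ η = β • f) :
    g • η = α • u + β • v := by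
  rw [← sub_eq_zero]
  by_contra hy
  refine hg (huv ▸ cross_eq_zero_of_cross_eq_zero hy ?_ ?_)
  · simp [huv, hβ, smul_smul, mul_comm]
  · rw [← neg_eq_zero, cross_anticomm]
    simp [huv, hα, smul_smul, mul_comm]

end CrossProduct

section Syzygies

section General

variable {σ R ι : Type*} [CommRing R] [Fintype ι] {f u v : ι → MvPolynomial σ R} {e : ι → ℤ}
  {p q : ℤ}

/-- A homogeneous syzygy `u` of total degree `p` of forms `f i` of degrees `e i`: the terms
`u i * f i` have degree `p` and add up to zero. -/
structure IsSyzygy (f : ι → MvPolynomial σ R) (e : ι → ℤ) (p : ℤ) (u : ι → MvPolynomial σ R) :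
    Prop where
  isForm : ∀ i, IsForm (u i) (p - e i)
  dotProduct_eq_zero : u ⬝ᵥ f = 0

lemma IsSyzygy.sub_smul (hu : IsSyzygy f e p u) (hv : IsSyzygy f e q v) {s : MvPolynomial σ R}
    (hs : IsForm s (q - p)) : IsSyzygy f e q (v - s • u) where
  isForm i := (hv.isForm i).sub (hs.mul_of_add_eq (hu.isForm i) (by ring))
  dotProduct_eq_zero := by
    rw [sub_dotProduct, smul_dotProduct, hu.dotProduct_eq_zero, hv.dotProduct_eq_zero, smul_zero,
      sub_zero]

lemma IsSyzygy.of_smul [IsDomain R] {l : MvPolynomial σ R} {m : ℤ} (hl : IsForm l m) (hl0 : l ≠ 0)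
    (h : IsSyzygy f e p (l • u)) : IsSyzygy f e (p - m) u where
  isForm i := by
    have hi : IsForm (u i * l) (p - e i) := mul_comm l (u i) ▸ h.isForm i
    exact sub_right_comm p (e i) m ▸ hi.of_mul hl hl0
  dotProduct_eq_zero := by
    have := h.dotProduct_eq_zero
    rw [smul_dotProduct] at this
    exact (smul_eq_zero.1 this).resolve_left hl0

end General

section CrossProduct

variable {σ R : Type*} [CommRing R] {f u v : Fin 3 → MvPolynomial σ R} {e : Fin 3 → ℤ} {p q : ℤ}

lemma IsForm.cross (hu : ∀ i, IsForm (u i) (p - e i)) (hv : ∀ i, IsForm (v i) (q - e i))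
    (i : Fin 3) : IsForm ((u ⨯₃ v) i) (p + q - ∑ j, e j + e i) := by
  rw [Fin.sum_univ_three]
  fin_cases i
  · exact ((hu 1).mul_of_add_eq (hv 2) (by simp; ring)).sub
      ((hu 2).mul_of_add_eq (hv 1) (by simp; ring))
  · exact ((hu 2).mul_of_add_eq (hv 0) (by simp; ring)).sub
      ((hu 0).mul_of_add_eq (hv 2) (by simp; ring))
  · exact ((hu 0).mul_of_add_eq (hv 1) (by simp; ring)).sub
      ((hu 1).mul_of_add_eq (hv 0) (by simp; ring))

end CrossProduct

section Binary

variable {f u v : Fin 3 → MvPolynomial (Fin 2) K} {e : Fin 3 → ℤ} {N : ℕ} {d n p q : ℤ}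

lemma isRelPrime_X_zero_X_one : IsRelPrime (X 0 : MvPolynomial (Fin 2) K) (X 1) :=
  (X_prime.irreducible.isRelPrime_iff_not_dvd).2 (by simp [X_dvd_X])

lemma X_pow_mem {σ R : Type*} [CommRing R] {I : Ideal (MvPolynomial σ R)}
    (hI : idealOfVars σ R ^ N ≤ I) (j : σ) : X j ^ N ∈ I :=
  hI (Ideal.pow_mem_pow (Ideal.subset_span (Set.mem_range_self j)) N)

lemma ne_zero_of_pow_idealOfVars_le (hI : idealOfVars (Fin 2) K ^ N ≤ Ideal.span (Set.range f)) :
    f ≠ 0 := by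
  rintro rfl
  have := X_pow_mem hI 0
  simp at this

lemma IsSyzygy.exists_cross_eq_smul (hf : ∀ i, IsForm (f i) (e i))
    (hI : idealOfVars (Fin 2) K ^ N ≤ Ideal.span (Set.range f))
    (hu : IsSyzygy f e p u) (hv : IsSyzygy f e q v) :
    ∃ g : MvPolynomial (Fin 2) K, IsForm g (p + q - ∑ j, e j) ∧ u ⨯₃ v = g • f := by
  obtain ⟨g, hg⟩ := exists_eq_smul_of_cross_eq_zero (X_pow_mem hI 0) (X_pow_mem hI 1)
    (pow_ne_zero _ (X_ne_zero 0)) isRelPrime_X_zero_X_one.pow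
    (cross_cross_eq_zero hu.dotProduct_eq_zero hv.dotProduct_eq_zero)
  obtain ⟨i, hi⟩ := Function.ne_iff.1 (ne_zero_of_pow_idealOfVars_le hI)
  have hform := IsForm.cross hu.isForm hv.isForm i
  rw [hg] at hform
  exact ⟨g, by simpa using hform.of_mul (hf i) hi, hg⟩

lemma IsForm.exists_eq_sum_X_mul {σ R : Type*} [CommRing R] [Fintype σ]
    {α : MvPolynomial σ R} (hα : IsForm α n) (hn : 0 < n) :
    ∃ a : σ → MvPolynomial σ R, α = ∑ i, a i * X i := by
  have := hα.mem_pow_idealOfVars (k := 1) (by exact_mod_cast hn)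
  rw [pow_one] at this
  exact (Ideal.mem_span_range_iff_exists_fun.1 this).imp fun a ha => ha.symm

lemma exists_smul_eq_X_zero_smul_add {a b : Fin 3 → MvPolynomial (Fin 2) K}
    {γ α β : MvPolynomial (Fin 2) K} {i j : ℤ} (hα : IsForm α i) (hi : 0 < i)
    (hβ : IsForm β j) (hj : 0 < j)
    (h : γ • ((X 1 : MvPolynomial (Fin 2) K) • a - (X 0 : MvPolynomial (Fin 2) K) • b) =
      α • u + β • v) :
    ∃ (t : Fin 3 → MvPolynomial (Fin 2) K) (α' β' : MvPolynomial (Fin 2) K),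
      γ • a = (X 0 : MvPolynomial (Fin 2) K) • t + α' • u + β' • v := by
  obtain ⟨α', rfl⟩ := hα.exists_eq_sum_X_mul hi
  obtain ⟨β', rfl⟩ := hβ.exists_eq_sum_X_mul hj
  have hdvd (k : Fin 3) : (X 0 : MvPolynomial (Fin 2) K) ∣ γ * a k - α' 1 * u k - β' 1 * v k := by
    refine isRelPrime_X_zero_X_one.dvd_of_dvd_mul_left
      ⟨γ * b k + α' 0 * u k + β' 0 * v k, ?_⟩
    have hk := congrFun h k
    simp only [Fin.sum_univ_two, Pi.smul_apply, Pi.sub_apply, Pi.add_apply, smul_eq_mul] at hk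
    linear_combination hk
  choose t ht using hdvd
  refine ⟨t, α' 1, β' 1, funext fun k => ?_⟩
  simp only [Pi.smul_apply, Pi.add_apply, smul_eq_mul, ← ht k]
  ring

/-- If `u, v` is a basis of the syzygies, then the syzygy `X 1 • a - X 0 • b`, where `a` and `b`
express `X 0 * w` and `X 1 * w` through `f`, has coefficients of positive degree in this basis. -/
lemma IsSyzygy.mem_of_forall_X_mul_mem (hf : ∀ i, IsForm (f i) (e i))
    (hI : idealOfVars (Fin 2) K ^ N ≤ Ideal.span (Set.range f))
    (hu : IsSyzygy f e p u) (hv : IsSyzygy f e q v) (hpq : p + q = ∑ i, e i)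
    {γ : MvPolynomial (Fin 2) K} (hγ : IsUnit γ) (huv : u ⨯₃ v = γ • f) (hp : p ≤ n + 1)
    (hq : q ≤ n + 1) {w : MvPolynomial (Fin 2) K} (hw : IsForm w n)
    (hXw : ∀ j, X j * w ∈ Ideal.span (Set.range f)) : w ∈ Ideal.span (Set.range f) := by
  have hXw' (j : Fin 2) : IsForm (X j * w) (n + 1) :=
    (isForm_X j).mul_of_add_eq hw (add_comm 1 n)
  obtain ⟨a, ha, haw⟩ := exists_isForm_coeffs hf (hXw' 0) (hXw 0)
  obtain ⟨b, hb, hbw⟩ := exists_isForm_coeffs hf (hXw' 1) (hXw 1)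
  have hη : IsSyzygy f e (n + 2)
      ((X 1 : MvPolynomial (Fin 2) K) • a - (X 0 : MvPolynomial (Fin 2) K) • b) :=
    { isForm i := ((isForm_X 1).mul_of_add_eq (ha i) (by ring)).sub
        ((isForm_X 0).mul_of_add_eq (hb i) (by ring))
      dotProduct_eq_zero := by
        rw [sub_dotProduct, smul_dotProduct, smul_dotProduct, haw, hbw, smul_eq_mul, smul_eq_mul]
        ring }
  obtain ⟨α, hα, hηv⟩ := hη.exists_cross_eq_smul hf hI hv
  obtain ⟨β, hβ, huη⟩ := hu.exists_cross_eq_smul hf hI hη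
  have hγf : γ • f ≠ 0 := smul_ne_zero hγ.ne_zero (ne_zero_of_pow_idealOfVars_le hI)
  obtain ⟨t, α', β', hat⟩ := exists_smul_eq_X_zero_smul_add hα (by omega) hβ (by omega)
    (smul_eq_add_of_cross_eq_smul hγf huv hηv huη)
  have hγw : γ * w = t ⬝ᵥ f := by
    apply mul_left_cancel₀ (X_ne_zero (R := K) (0 : Fin 2))
    have := congrArg (· ⬝ᵥ f) hat
    simp only [add_dotProduct, smul_dotProduct, haw, hu.dotProduct_eq_zero,
      hv.dotProduct_eq_zero, smul_eq_mul] at this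
    linear_combination this
  rw [← Ideal.unit_mul_mem_iff_mem _ hγ, hγw]
  exact Ideal.mem_span_range_iff_exists_fun.2 ⟨t, rfl⟩

lemma IsSyzygy.mem_of_cross_eq_isUnit_smul (hf : ∀ i, IsForm (f i) (e i))
    (hI : idealOfVars (Fin 2) K ^ N ≤ Ideal.span (Set.range f))
    (hu : IsSyzygy f e p u) (hv : IsSyzygy f e q v) (hpq : p + q = ∑ i, e i)
    {γ : MvPolynomial (Fin 2) K} (hγ : IsUnit γ) (huv : u ⨯₃ v = γ • f) (hp : p ≤ n + 1)
    (hq : q ≤ n + 1) {w : MvPolynomial (Fin 2) K} (hw : IsForm w n) :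
    w ∈ Ideal.span (Set.range f) := by
  obtain ⟨k, hk⟩ : ∃ k : ℕ, N ≤ n + k := ⟨(N - n).toNat, by omega⟩
  induction k generalizing n w with
  | zero => exact hI (hw.mem_pow_idealOfVars (by simpa using hk))
  | succ k ih =>
    refine hu.mem_of_forall_X_mul_mem hf hI hv hpq hγ huv hp hq hw fun j => ?_
    exact ih (n := n + 1) (by omega) (by omega)
      ((isForm_X j).mul_of_add_eq hw (add_comm 1 n)) (by push_cast at hk; omega)

section CommonZero

variable {P : Fin 2 → K}

/-- The linear form in two variables vanishing at the point `P`. -/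
def lineThrough (P : Fin 2 → K) : MvPolynomial (Fin 2) K := C (P 1) * X 0 - C (P 0) * X 1

lemma isForm_lineThrough (P : Fin 2 → K) : IsForm (lineThrough P) 1 :=
  ((isForm_X 0).C_mul _).sub ((isForm_X 1).C_mul _)

lemma lineThrough_ne_zero (hP : P ≠ 0) : lineThrough P ≠ 0 := by
  refine mt (fun h => ?_) hP
  have h0 := congrArg (eval ![0, 1]) h
  have h1 := congrArg (eval ![1, 0]) h
  ext i
  fin_cases i
  · simpa [lineThrough] using h0
  · simpa [lineThrough] using h1

lemma lineThrough_dvd {g : MvPolynomial (Fin 2) K} (hg : IsForm g n) (hP : P ≠ 0)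
    (h0 : eval P g = 0) : lineThrough P ∣ g := by
  rcases lt_or_ge n 0 with hn | hn
  · rw [hg.eq_zero_of_neg hn]; exact dvd_zero _
  lift n to ℕ using hn
  obtain ⟨i, hi⟩ := Function.ne_iff.1 hP
  let π := Ideal.Quotient.mkₐ K (Ideal.span {lineThrough P})
  have hX : algebraMap K _ (P 1) * π (X 0) = algebraMap K _ (P 0) * π (X 1) := by
    have : π (C (P 1) * X 0 - C (P 0) * X 1) = 0 :=
      Ideal.Quotient.eq_zero_iff_mem.2 (Ideal.mem_span_singleton_self _)
    rwa [map_sub, map_mul, map_mul, ← algebraMap_eq, AlgHom.commutes,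
      AlgHom.commutes, sub_eq_zero] at this
  have hlin (j : Fin 2) :
      algebraMap K _ (P i) * π (X j) = π (X i) * algebraMap K _ (P j) := by
    fin_cases i <;> fin_cases j
    exacts [mul_comm _ _, hX.symm.trans (mul_comm _ _), hX.trans (mul_comm _ _), mul_comm _ _]
  have hscale : algebraMap K _ (P i ^ n) * π g = 0 := by
    calc algebraMap K _ (P i ^ n) * π g
        = aeval (fun j => algebraMap K _ (P i) * π (X j)) g := by
          rw [hg.aeval_mul, map_pow]
          exact congrArg (_ * ·) (DFunLike.congr_fun (aeval_unique π) g)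
      _ = π (X i) ^ n * aeval (fun j => algebraMap K _ (P j)) g := by
          simp_rw [hlin]; rw [hg.aeval_mul]
      _ = π (X i) ^ n * algebraMap K _ (eval P g) := congrArg _ (aeval_algebraMap_apply _ P g)
      _ = 0 := by rw [h0, map_zero, mul_zero]
  have hunit : IsUnit (algebraMap K (_ ⧸ Ideal.span {lineThrough P}) (P i ^ n)) :=
    (pow_ne_zero n hi).isUnit.map _
  rw [← Ideal.mem_span_singleton]
  exact Ideal.Quotient.eq_zero_iff_mem.1 (hunit.mul_right_eq_zero.1 hscale)

lemma exists_ne_zero_eval_eq_zero [IsAlgClosed K] {g : MvPolynomial (Fin 2) K} (hg : ¬IsUnit g) :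
    ∃ P : Fin 2 → K, P ≠ 0 ∧ eval P g = 0 := by
  by_contra! h
  have hdvd (i : Fin 2) : ∃ k, g ∣ X i ^ k := by
    have : X i ∈ (Ideal.span {g}).radical := by
      rw [← vanishingIdeal_zeroLocus_eq_radical (K := K)]
      intro P hP
      have hP0 : P = 0 := by
        by_contra hP0
        exact h P hP0 (hP g (Ideal.mem_span_singleton_self g))
      simp [hP0]
    exact this.imp fun k hk => Ideal.mem_span_singleton.1 hk
  obtain ⟨a, ha⟩ := hdvd 0
  obtain ⟨b, hb⟩ := hdvd 1
  exact hg (isRelPrime_X_zero_X_one.pow ha hb)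

lemma exists_isForm_eval_eq (hP : P ≠ 0) (k : ℕ) (c : K) :
    ∃ s : MvPolynomial (Fin 2) K, IsForm s k ∧ eval P s = c := by
  obtain ⟨i, hi⟩ := Function.ne_iff.1 hP
  refine ⟨C (c / P i ^ k) * X i ^ k, (isForm_X_pow i k).C_mul _, ?_⟩
  simp [div_mul_cancel₀ c (pow_ne_zero k hi)]

lemma IsSyzygy.exists_eq_lineThrough_smul (hP : P ≠ 0) (hu : IsSyzygy f e p u)
    (h0 : ∀ i, eval P (u i) = 0) : ∃ w, IsSyzygy f e (p - 1) w ∧ u = lineThrough P • w := by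
  choose w hw using fun i => lineThrough_dvd (hu.isForm i) hP (h0 i)
  obtain rfl : u = lineThrough P • w := funext hw
  exact ⟨w, hu.of_smul (isForm_lineThrough P) (lineThrough_ne_zero hP), rfl⟩

lemma exists_eval_eq_mul_eval (hu0 : ∃ i, eval P (u i) ≠ 0)
    (hPuv : ∀ i, eval P ((u ⨯₃ v) i) = 0) : ∃ c : K, ∀ i, eval P (v i) = c * eval P (u i) := by
  obtain ⟨i, hi⟩ := hu0
  have hcross : (eval P ∘ v) ⨯₃ (eval P ∘ u) = 0 := by
    rw [← cross_anticomm, neg_eq_zero]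
    ext j
    rw [Pi.zero_apply, ← hPuv j]
    fin_cases j <;> simp [crossProduct]
  have h := dotProduct_smul_eq_of_cross_eq_zero (Pi.single i 1) hcross
  refine ⟨eval P (v i) / eval P (u i), fun j => ?_⟩
  have hj := congrFun h j
  simp only [single_one_dotProduct, Pi.smul_apply, Function.comp_apply, smul_eq_mul] at hj
  field_simp
  linear_combination hj

/-- At a common zero of the coordinates of `u ⨯₃ v` the vectors `u` and `v` become proportional,
so that a combination of them can be divided by a linear form. -/
lemma IsSyzygy.exists_lower_degree (hP : P ≠ 0) (hu : IsSyzygy f e p u) (hv : IsSyzygy f e q v)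
    (hpq : p ≤ q) (huv : u ⨯₃ v ≠ 0) (hPuv : ∀ i, eval P ((u ⨯₃ v) i) = 0) :
    ∃ p' q' u' v', p' ≤ p ∧ q' ≤ q ∧ p' + q' < p + q ∧
      IsSyzygy f e p' u' ∧ IsSyzygy f e q' v' ∧ u' ⨯₃ v' ≠ 0 := by
  by_cases hu0 : ∀ i, eval P (u i) = 0
  · obtain ⟨w, hw, rfl⟩ := hu.exists_eq_lineThrough_smul hP hu0
    refine ⟨p - 1, q, w, v, by omega, le_rfl, by omega, hw, hv, fun h => huv ?_⟩
    rw [map_smul, LinearMap.smul_apply, h, smul_zero]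
  push Not at hu0
  obtain ⟨c, hc⟩ := exists_eval_eq_mul_eval hu0 hPuv
  obtain ⟨s, hs, hsP⟩ := exists_isForm_eval_eq hP (q - p).toNat c
  rw [Int.toNat_of_nonneg (by omega)] at hs
  obtain ⟨w, hw, hvw⟩ := (hu.sub_smul hv hs).exists_eq_lineThrough_smul hP fun i => by
    simp [hc, hsP]
  refine ⟨p, q - 1, u, w, le_rfl, by omega, by omega, hu, hw, fun h => huv ?_⟩
  rw [← sub_add_cancel v (s • u), hvw, map_add, map_smul, map_smul, h, cross_self, smul_zero,
    smul_zero, add_zero]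

end CommonZero

theorem IsSyzygy.mem_of_cross_ne_zero [IsAlgClosed K] (hf : ∀ i, IsForm (f i) (e i))
    (hI : idealOfVars (Fin 2) K ^ N ≤ Ideal.span (Set.range f))
    (hu : IsSyzygy f e p u) (hv : IsSyzygy f e q v) (huv : u ⨯₃ v ≠ 0) (hp : p ≤ n + 1)
    (hq : q ≤ n + 1) {w : MvPolynomial (Fin 2) K} (hw : IsForm w n) :
    w ∈ Ideal.span (Set.range f) := by
  induction h : (p + q - ∑ i, e i).toNat using Nat.strong_induction_on generalizing p q u v with
  | _ m ih =>
  wlog hpq : p ≤ q generalizing p q u v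
  · exact this hv hu (by rwa [← cross_anticomm, neg_ne_zero]) hq hp (by rwa [add_comm])
      (le_of_not_ge hpq)
  obtain ⟨g, hg, hgf⟩ := hu.exists_cross_eq_smul hf hI hv
  by_cases hgu : IsUnit g
  · have hpq0 := sub_eq_zero.1 (hg.eq_zero_of_isUnit hgu)
    exact hu.mem_of_cross_eq_isUnit_smul hf hI hv hpq0 hgu hgf hp hq hw
  obtain ⟨P, hP, hgP⟩ := exists_ne_zero_eval_eq_zero hgu
  obtain ⟨p', q', u', v', hp', hq', hlt, hu', hv', huv'⟩ :=
    hu.exists_lower_degree hP hv hpq huv fun i => by simp [hgf, hgP]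
  obtain ⟨g', hg', hgf'⟩ := hu'.exists_cross_eq_smul hf hI hv'
  have hdeg' : 0 ≤ p' + q' - ∑ i, e i := by
    by_contra! hneg
    exact huv' (by rw [hgf', hg'.eq_zero_of_neg hneg, zero_smul])
  exact ih _ (by omega) hu' hv' huv' (by omega) (by omega) rfl

end Binary

end Syzygies

section LineRestriction

variable {S T : Type*} [CommRing S] [CommRing T] (s t : S)

/-- The linear form `z - s x - t y`, the equation of the line `z = s x + t y` of the projective
plane. The parameters live in the coefficient ring, so that taking them to be indeterminates
yields the generic line. -/
def lineForm : MvPolynomial (Fin 3) S := X 2 - C s * X 0 - C t * X 1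

/-- The restriction `p(x, y, z) ↦ p(x, y, s x + t y)` of polynomials to the line
`z = s x + t y`. -/
def lineRestriction : MvPolynomial (Fin 3) S →ₐ[S] MvPolynomial (Fin 2) S :=
  aeval ![X 0, X 1, C s * X 0 + C t * X 1]

@[simp]
lemma lineRestriction_X_zero : lineRestriction s t (X 0) = X 0 := by
  simp [lineRestriction]

@[simp]
lemma lineRestriction_X_one : lineRestriction s t (X 1) = X 1 := by
  simp [lineRestriction]

@[simp]
lemma lineRestriction_X_two : lineRestriction s t (X 2) = C s * X 0 + C t * X 1 := by
  simp [lineRestriction]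

@[simp]
lemma lineRestriction_lineForm : lineRestriction s t (lineForm s t) = 0 := by
  simp [lineForm]

@[simp]
lemma lineRestriction_rename_castSucc (p : MvPolynomial (Fin 2) S) :
    lineRestriction s t (rename Fin.castSucc p) = p := by
  have h : (lineRestriction s t).comp (rename Fin.castSucc) = AlgHom.id S _ := by
    ext i : 1
    fin_cases i <;> simp [lineRestriction]
  exact DFunLike.congr_fun h p

lemma lineForm_ne_zero [Nontrivial S] : lineForm s t ≠ 0 := fun h => by
  simpa [lineForm] using congrArg (eval ![0, 0, 1]) h

lemma lineForm_dvd_sub_rename_lineRestriction (p : MvPolynomial (Fin 3) S) :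
    lineForm s t ∣ p - rename Fin.castSucc (lineRestriction s t p) := by
  have h : (Ideal.Quotient.mkₐ S (Ideal.span {lineForm s t})).comp
      ((rename Fin.castSucc).comp (lineRestriction s t)) = Ideal.Quotient.mkₐ S _ := by
    ext i : 1
    refine (Ideal.Quotient.eq.2 (Ideal.mem_span_singleton.2 ?_)).symm
    fin_cases i <;> simp [lineForm, ← sub_sub]
  exact Ideal.mem_span_singleton.1 (Ideal.Quotient.eq.1 (DFunLike.congr_fun h p).symm)

lemma lineForm_dvd_iff {p : MvPolynomial (Fin 3) S} :
    lineForm s t ∣ p ↔ lineRestriction s t p = 0 := by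
  refine ⟨fun ⟨q, hq⟩ => by simp [hq], fun hp => ?_⟩
  simpa [hp] using lineForm_dvd_sub_rename_lineRestriction s t p

lemma map_lineForm (g : S →+* T) : map g (lineForm s t) = lineForm (g s) (g t) := by
  simp [lineForm]

lemma map_lineRestriction (g : S →+* T) (p : MvPolynomial (Fin 3) S) :
    map g (lineRestriction s t p) = lineRestriction (g s) (g t) (map g p) := by
  have h : (map g).comp (lineRestriction s t).toRingHom =
      (lineRestriction (g s) (g t)).toRingHom.comp (map g) := by
    ext i : 2
    · simp
    · fin_cases i <;> simp [lineRestriction]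
  exact DFunLike.congr_fun h p

lemma isForm_lineForm : IsForm (lineForm s t) 1 :=
  ((isForm_X 2).sub ((isForm_X 0).C_mul s)).sub ((isForm_X 1).C_mul t)

variable {s t}

lemma IsForm.map {σ : Type*} {p : MvPolynomial σ S} {n : ℤ} (hp : IsForm p n) (g : S →+* T) :
    IsForm (MvPolynomial.map g p) n :=
  fun m hm => hp fun h => hm (by rw [coeff_map, h, map_zero])

lemma IsForm.lineRestriction {p : MvPolynomial (Fin 3) S} {n : ℤ} (hp : IsForm p n) :
    IsForm (lineRestriction s t p) n := by
  rcases lt_or_ge n 0 with hn | hn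
  · rw [hp.eq_zero_of_neg hn, map_zero]
    exact isWeightedHomogeneous_zero S _ n
  lift n to ℕ using hn
  rw [isForm_natCast] at hp ⊢
  rw [← one_mul n]
  refine hp.aeval _ fun i => isForm_natCast.1 ?_
  fin_cases i
  exacts [isForm_X 0, isForm_X 1, ((isForm_X 0).C_mul s).add ((isForm_X 1).C_mul t)]

end LineRestriction

section Derivation

lemma exists_eq_smul_of_cross_derivation_eq_zero {R B : Type*} [CommRing R] [CommRing B]
    [IsDomain B] [UniqueFactorizationMonoid B] [Algebra R B] (D : Derivation R B B)
    (hD : ∀ f, f ∣ D f → D f = 0) {h : Fin 3 → B} (hh : h ⨯₃ (fun i => D (h i)) = 0) :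
    ∃ (c : B) (u : Fin 3 → B), h = c • u ∧ ∀ i, D (u i) = 0 := by
  classical
  let _ : NormalizedGCDMonoid B := Classical.arbitrary _
  obtain ⟨u, hu, hgcd⟩ := Finset.extract_gcd (s := Finset.univ) h Finset.univ_nonempty
  replace hu : h = Finset.univ.gcd h • u := funext fun i => hu i (Finset.mem_univ i)
  rcases eq_or_ne (Finset.univ.gcd h) 0 with hg | hg
  · exact ⟨0, 0, by rw [hu, hg, zero_smul, zero_smul], fun _ => D.map_zero⟩
  have hparallel (i j : Fin 3) : u i * D (u j) = u j * D (u i) := by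
    have h1 : D (h i) * h j = h i * D (h j) :=
      congrFun (apply_smul_eq_of_cross_eq_zero hh i) j
    rw [hu] at h1
    simp only [Pi.smul_apply, smul_eq_mul, D.leibniz] at h1
    apply mul_left_cancel₀ (mul_ne_zero hg hg)
    linear_combination -h1
  refine ⟨_, u, hu, fun i => hD _ ?_⟩
  have hdvd : u i ∣ Finset.univ.gcd fun j => u j * D (u i) :=
    Finset.dvd_gcd fun j _ => ⟨D (u j), (hparallel i j).symm⟩
  simpa only [hgcd, one_mul] using hdvd.trans (Finset.gcd_mul_right' _ u (D (u i))).dvd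

section PDeriv

variable {σ R : Type*}

lemma pderiv_pderiv_comm [CommSemiring R] (i j : σ) (p : MvPolynomial σ R) :
    pderiv i (pderiv j p) = pderiv j (pderiv i p) := by
  classical
  rcases eq_or_ne i j with rfl | hij
  · rfl
  ext m
  simp [coeff_pderiv, add_right_comm, mul_right_comm, hij, hij.symm]

lemma totalDegree_pderiv_lt [CommSemiring R] {p : MvPolynomial σ R} (hp : p.totalDegree ≠ 0)
    (i : σ) : (pderiv i p).totalDegree < p.totalDegree := by
  refine (Finset.sup_lt_iff (Nat.pos_of_ne_zero hp)).2 fun m hm => ?_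
  have hm' : m + Finsupp.single i 1 ∈ p.support := by
    rw [mem_support_iff, coeff_pderiv] at hm
    exact mem_support_iff.2 (left_ne_zero_of_mul hm)
  calc m.degree < (m + Finsupp.single i 1).degree := by
        rw [map_add, Finsupp.degree_single]; exact Nat.lt_succ_self _
    _ ≤ p.totalDegree := le_totalDegree hm'

lemma exists_pderiv_eq [Field R] [CharZero R] (i : σ) (p : MvPolynomial σ R) :
    ∃ P, pderiv i P = p := by
  induction p using MvPolynomial.induction_on' with
  | add p q hp hq =>
    obtain ⟨P, rfl⟩ := hp
    obtain ⟨Q, rfl⟩ := hq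
    exact ⟨P + Q, map_add _ _ _⟩
  | monomial m a =>
    refine ⟨monomial (m + Finsupp.single i 1) (a / (m i + 1)), ?_⟩
    have h : (m i + 1 : R) ≠ 0 := Nat.cast_add_one_ne_zero (m i)
    rw [pderiv_monomial, add_tsub_cancel_right]
    simp [h]

lemma eq_C_of_forall_pderiv_eq_zero [CommRing R] [IsAddTorsionFree R] {p : MvPolynomial σ R}
    (hp : ∀ i, pderiv i p = 0) : p = C (coeff 0 p) := by
  refine MvPolynomial.coe_injective σ R (MvPowerSeries.pderiv.ext (fun i => ?_) ?_)
  · rw [MvPowerSeries.pderiv_coe, MvPowerSeries.pderiv_coe, hp, pderiv_C]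
  · rw [← MvPowerSeries.coeff_zero_eq_constantCoeff_apply]; simp

end PDeriv

/-- The restriction `p(x, y, z) ↦ p(x, y, s x + t y)` to the generic line, as a polynomial in
`s` and `t` whose coefficients are polynomials in `x` and `y`. -/
def genericRestriction :
    MvPolynomial (Fin 3) K →ₐ[K] MvPolynomial (Fin 2) (MvPolynomial (Fin 2) K) :=
  aeval ![C (X 0), C (X 1), X 0 * C (X 0) + X 1 * C (X 1)]

/-- The derivation `y ∂/∂s - x ∂/∂t` of the ring of polynomials in `s` and `t` whose coefficients
are polynomials in `x` and `y`; it kills `s x + t y`. -/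
def parameterDerivation (K : Type*) [Field K] : Derivation (MvPolynomial (Fin 2) K)
    (MvPolynomial (Fin 2) (MvPolynomial (Fin 2) K))
    (MvPolynomial (Fin 2) (MvPolynomial (Fin 2) K)) :=
  (X 1 : MvPolynomial (Fin 2) K) • pderiv 0 - (X 0 : MvPolynomial (Fin 2) K) • pderiv 1

lemma parameterDerivation_apply (f : MvPolynomial (Fin 2) (MvPolynomial (Fin 2) K)) :
    parameterDerivation K f = C (X 1) * pderiv 0 f - C (X 0) * pderiv 1 f := by
  rw [← smul_eq_C_mul, ← smul_eq_C_mul]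
  rfl

lemma genericRestriction_rename_castSucc (p : MvPolynomial (Fin 2) K) :
    genericRestriction (rename Fin.castSucc p) = C p := by
  have h : (genericRestriction (K := K)).comp (rename Fin.castSucc) =
      IsScalarTower.toAlgHom K _ _ := by
    ext i : 1
    fin_cases i <;> simp [genericRestriction]
  exact DFunLike.congr_fun h p

lemma pderiv_genericRestriction (i : Fin 2) (p : MvPolynomial (Fin 3) K) :
    pderiv i (genericRestriction p) = C (X i) * genericRestriction (pderiv 2 p) := by
  induction p using MvPolynomial.induction_on with
  | C a => simp [genericRestriction]
  | add p q hp hq => simp only [map_add, hp, hq, mul_add]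
  | mul_X p j hp =>
    have hj : pderiv i (genericRestriction (X j : MvPolynomial (Fin 3) K)) =
        C (X i) * genericRestriction (pderiv 2 (X j : MvPolynomial (Fin 3) K)) := by
      fin_cases i <;> fin_cases j <;> simp [genericRestriction, pderiv_X]
    rw [map_mul, pderiv_mul, hp, hj, pderiv_mul, map_add, map_mul, map_mul]
    ring

lemma parameterDerivation_genericRestriction (p : MvPolynomial (Fin 3) K) :
    parameterDerivation K (genericRestriction p) = 0 := by
  rw [parameterDerivation_apply, pderiv_genericRestriction, pderiv_genericRestriction]
  ring

lemma exists_pderiv_eq_C_X_mul {f : MvPolynomial (Fin 2) (MvPolynomial (Fin 2) K)}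
    (hf : parameterDerivation K f = 0) :
    ∃ g, parameterDerivation K g = 0 ∧ ∀ i, pderiv i f = C (X i) * g := by
  rw [parameterDerivation_apply, sub_eq_zero] at hf
  have hprime : Prime (C (X 0) : MvPolynomial (Fin 2) (MvPolynomial (Fin 2) K)) :=
    (prime_C_iff _).2 X_prime
  obtain ⟨g, hg⟩ : C (X 0) ∣ pderiv 0 f := by
    refine (hprime.dvd_or_dvd ⟨_, hf⟩).resolve_left fun h => ?_
    have := (C_dvd_iff_dvd_coeff _ _).1 h 0
    rw [coeff_zero_C, X_dvd_X] at this
    exact absurd this (by decide)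
  have hg' : pderiv 1 f = C (X 1) * g := by
    apply mul_left_cancel₀ hprime.ne_zero
    rw [← hf, hg, mul_left_comm]
  refine ⟨g, mul_left_cancel₀ hprime.ne_zero ?_, Fin.forall_fin_two.2 ⟨hg, hg'⟩⟩
  have hmixed := pderiv_pderiv_comm 0 1 f
  rw [hg, hg', pderiv_C_mul, pderiv_C_mul] at hmixed
  rw [parameterDerivation_apply, hmixed]
  ring

lemma exists_genericRestriction_eq [CharZero K]
    {f : MvPolynomial (Fin 2) (MvPolynomial (Fin 2) K)} (hf : parameterDerivation K f = 0) :
    ∃ p, genericRestriction p = f := by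
  induction hn : f.totalDegree using Nat.strong_induction_on generalizing f with
  | _ n ih =>
    obtain ⟨g, hg, hfg⟩ := exists_pderiv_eq_C_X_mul hf
    obtain ⟨p, rfl⟩ : ∃ p, genericRestriction p = g := by
      rcases eq_or_ne g 0 with rfl | hg0
      · exact ⟨0, map_zero _⟩
      have h0 : pderiv 0 f ≠ 0 := by
        rw [hfg]
        exact mul_ne_zero (C_ne_zero.2 (X_ne_zero 0)) hg0
      refine ih _ ?_ hg rfl
      calc g.totalDegree ≤ (pderiv 0 f).totalDegree :=
            totalDegree_le_of_dvd_of_isDomain ⟨_, (hfg 0).trans (mul_comm _ _)⟩ h0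
        _ < n := hn ▸ totalDegree_pderiv_lt (fun h => h0 <| by
          rw [totalDegree_eq_zero_iff_eq_C.1 h, pderiv_C]) 0
    obtain ⟨P, rfl⟩ := exists_pderiv_eq 2 p
    have hconst := eq_C_of_forall_pderiv_eq_zero (p := f - genericRestriction P) fun i => by
      rw [map_sub, pderiv_genericRestriction, hfg, sub_self]
    refine ⟨P + rename Fin.castSucc (coeff 0 (f - genericRestriction P)), ?_⟩
    rw [map_add, genericRestriction_rename_castSucc, ← hconst, add_sub_cancel]

lemma parameterDerivation_eq_zero_of_dvd {f : MvPolynomial (Fin 2) (MvPolynomial (Fin 2) K)}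
    (h : f ∣ parameterDerivation K f) : parameterDerivation K f = 0 := by
  by_contra hne
  have hdeg : f.totalDegree ≠ 0 := fun h0 => hne <| by
    rw [totalDegree_eq_zero_iff_eq_C.1 h0, parameterDerivation_apply, pderiv_C, pderiv_C]
    ring
  have hlt (i j : Fin 2) : (C (X i) * pderiv j f).totalDegree < f.totalDegree := by
    rw [← smul_eq_C_mul]
    exact (totalDegree_smul_le _ _).trans_lt (totalDegree_pderiv_lt hdeg j)
  refine (totalDegree_le_of_dvd_of_isDomain h hne).not_gt ?_
  rw [parameterDerivation_apply]
  exact (totalDegree_sub _ _).trans_lt (max_lt (hlt 1 0) (hlt 0 1))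

end Derivation

section GenericLine

lemma coeff_coeff_commAlgEquiv {σ τ R : Type*} [CommSemiring R]
    (p : MvPolynomial σ (MvPolynomial τ R)) (m : σ →₀ ℕ) (n : τ →₀ ℕ) :
    coeff m (coeff n (commAlgEquiv R σ τ p)) = coeff n (coeff m p) := by
  classical
  induction p using MvPolynomial.induction_on' with
  | add p q hp hq => simp only [map_add, coeff_add, hp, hq]
  | monomial m' a =>
    induction a using MvPolynomial.induction_on' with
    | add a b ha hb => simp only [map_add, coeff_add, ha, hb]
    | monomial n' r =>
      have h : commAlgEquiv R σ τ (monomial m' (monomial n' r)) = monomial n' (monomial m' r) :=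
        AddMonoidAlgebra.commAlgEquiv_single_single ..
      rw [h]
      simp only [coeff_monomial, apply_ite (coeff _), coeff_zero]
      split_ifs <;> rfl

variable {p : MvPolynomial (Fin 2) (MvPolynomial (Fin 2) K)}

/-- The derivation `y ∂/∂s - x ∂/∂t`, when polynomials in `x`, `y`, `s` and `t` are regarded as
polynomials in `x` and `y` whose coefficients are polynomials in `s` and `t`. -/
def coeffDerivation (K : Type*) [Field K] : Derivation K
    (MvPolynomial (Fin 2) (MvPolynomial (Fin 2) K))
    (MvPolynomial (Fin 2) (MvPolynomial (Fin 2) K)) :=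
  Derivation.mk' ((commAlgEquiv K (Fin 2) (Fin 2)).symm.toLinearMap ∘ₗ
      (parameterDerivation K).toLinearMap.restrictScalars K ∘ₗ
      (commAlgEquiv K (Fin 2) (Fin 2)).toLinearMap) fun p q => by simp

lemma commAlgEquiv_coeffDerivation (p : MvPolynomial (Fin 2) (MvPolynomial (Fin 2) K)) :
    commAlgEquiv K (Fin 2) (Fin 2) (coeffDerivation K p) =
      parameterDerivation K (commAlgEquiv K (Fin 2) (Fin 2) p) :=
  AlgEquiv.apply_symm_apply _ _

lemma commAlgEquiv_lineRestriction_map_C (p : MvPolynomial (Fin 3) K) :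
    commAlgEquiv K (Fin 2) (Fin 2) (lineRestriction (X 0) (X 1) (map C p)) =
      genericRestriction p := by
  have h : ((commAlgEquiv K (Fin 2) (Fin 2)).toAlgHom.comp
      ((lineRestriction (X 0) (X 1)).restrictScalars K)).comp
        (mapAlgHom (Algebra.ofId K (MvPolynomial (Fin 2) K))) = genericRestriction := by
    ext i : 1
    fin_cases i <;> simp [lineRestriction, genericRestriction]
  exact DFunLike.congr_fun h p

lemma coeffDerivation_lineRestriction_map_C (p : MvPolynomial (Fin 3) K) :
    coeffDerivation K (lineRestriction (X 0) (X 1) (map C p)) = 0 := by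
  apply (commAlgEquiv K (Fin 2) (Fin 2)).injective
  rw [commAlgEquiv_coeffDerivation, commAlgEquiv_lineRestriction_map_C,
    parameterDerivation_genericRestriction, map_zero]

lemma coeffDerivation_eq_zero_of_dvd (h : p ∣ coeffDerivation K p) : coeffDerivation K p = 0 := by
  apply (commAlgEquiv K (Fin 2) (Fin 2)).injective
  have h' := map_dvd (commAlgEquiv K (Fin 2) (Fin 2)) h
  rw [commAlgEquiv_coeffDerivation] at h' ⊢
  rw [parameterDerivation_eq_zero_of_dvd h', map_zero]

lemma exists_lineRestriction_map_C_eq [CharZero K] (hp : coeffDerivation K p = 0) :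
    ∃ q, lineRestriction (X 0) (X 1) (map C q) = p := by
  obtain ⟨q, hq⟩ := exists_genericRestriction_eq (f := commAlgEquiv K (Fin 2) (Fin 2) p) <| by
    rw [← commAlgEquiv_coeffDerivation, hp, map_zero]
  exact ⟨q, (commAlgEquiv K (Fin 2) (Fin 2)).injective <| by
    rw [commAlgEquiv_lineRestriction_map_C, hq]⟩

lemma coeff_commAlgEquiv_symm_pderiv_commAlgEquiv {σ τ R : Type*} [CommSemiring R]
    (p : MvPolynomial σ (MvPolynomial τ R)) (i : τ) (m : σ →₀ ℕ) :
    coeff m ((commAlgEquiv R σ τ).symm (pderiv i (commAlgEquiv R σ τ p))) =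
      pderiv i (coeff m p) := by
  ext n
  rw [← coeff_coeff_commAlgEquiv, AlgEquiv.apply_symm_apply, coeff_pderiv, coeff_pderiv,
    ← coeff_coeff_commAlgEquiv p, mul_comm, mul_comm (coeff _ _)]
  exact_mod_cast coeff_C_mul m ((n i + 1 : ℕ) : R) _

lemma IsForm.coeffDerivation {n : ℤ} (hp : IsForm p n) :
    IsForm (coeffDerivation K p) (n + 1) := by
  let φ := commAlgEquiv K (Fin 2) (Fin 2)
  have hpderiv (i : Fin 2) : IsForm (φ.symm (pderiv i (φ p))) n := fun m hm => hp fun h => hm <| by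
    rw [coeff_commAlgEquiv_symm_pderiv_commAlgEquiv, h, map_zero]
  have h : WeakLefschetz.coeffDerivation K p =
      X 1 * φ.symm (pderiv 0 (φ p)) - X 0 * φ.symm (pderiv 1 (φ p)) := by
    apply φ.injective
    simp [φ, commAlgEquiv_coeffDerivation, parameterDerivation_apply]
  rw [h]
  exact ((isForm_X 1).mul_of_add_eq (hpderiv 0) (add_comm _ _)).sub
    ((isForm_X 0).mul_of_add_eq (hpderiv 1) (add_comm _ _))

lemma eq_zero_of_lineRestriction_map_C_eq_zero {p : MvPolynomial (Fin 3) K}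
    (hp : lineRestriction (X 0 : MvPolynomial (Fin 2) K) (X 1) (map C p) = 0) : p = 0 := by
  by_contra hp0
  have h := map_dvd (commAlgEquiv K (Fin 3) (Fin 2)) ((lineForm_dvd_iff _ _).2 hp)
  have hC : commAlgEquiv K (Fin 3) (Fin 2) (map C p) = C p :=
    (commAlgEquiv K (Fin 2) (Fin 3)).symm_apply_eq.2 (commAlgEquiv_C p).symm
  rw [hC, dvd_C_iff_exists hp0] at h
  obtain ⟨b, -, hb⟩ := h
  have hb' := congrArg (pderiv 0) hb
  simp [lineForm] at hb'

end GenericLine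

section KernelOnGenericLine

variable {F : Fin 3 → MvPolynomial (Fin 3) K} {e : Fin 3 → ℤ} {n : ℤ}

lemma IsSyzygy.map {σ ι S T : Type*} [CommRing S] [CommRing T] [Fintype ι]
    {f u : ι → MvPolynomial σ S} {e : ι → ℤ} (hu : IsSyzygy f e n u) (g : S →+* T) :
    IsSyzygy (MvPolynomial.map g ∘ f) e n (MvPolynomial.map g ∘ u) where
  isForm i := (hu.isForm i).map g
  dotProduct_eq_zero := by
    rw [← RingHom.map_dotProduct, hu.dotProduct_eq_zero, map_zero]

lemma IsSyzygy.coeffDerivation {u : Fin 3 → MvPolynomial (Fin 2) (MvPolynomial (Fin 2) K)}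
    (hu : IsSyzygy (fun i => lineRestriction (X 0) (X 1) (MvPolynomial.map C (F i))) e n u) :
    IsSyzygy (fun i => lineRestriction (X 0) (X 1) (MvPolynomial.map C (F i))) e (n + 1)
      (fun i => coeffDerivation K (u i)) where
  isForm i := by simpa only [sub_add_eq_add_sub] using (hu.isForm i).coeffDerivation
  dotProduct_eq_zero := by
    have h : ∑ i, WeakLefschetz.coeffDerivation K
        (u i * lineRestriction (X 0) (X 1) (MvPolynomial.map C (F i))) = 0 := by
      rw [← map_sum]
      exact (congrArg _ hu.dotProduct_eq_zero).trans (map_zero _)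
    refine (Finset.sum_congr rfl fun i _ => ?_).trans h
    rw [Derivation.leibniz, coeffDerivation_lineRestriction_map_C, smul_zero, zero_add,
      smul_eq_mul, mul_comm]

lemma map_eval_map_C {σ τ R : Type*} [CommSemiring R] (x : τ → R) (p : MvPolynomial σ R) :
    MvPolynomial.map (eval x) (MvPolynomial.map C p) = p := by
  rw [MvPolynomial.map_map, show (eval x).comp C = RingHom.id R from RingHom.ext (eval_C (f := x)),
    MvPolynomial.map_id]

lemma exists_map_eval_ne_zero {σ τ R : Type*} [CommRing R] [IsDomain R] [Infinite R]
    {p : MvPolynomial σ (MvPolynomial τ R)} (hp : p ≠ 0) :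
    ∃ x : τ → R, MvPolynomial.map (eval x) p ≠ 0 := by
  obtain ⟨m, hm⟩ := ne_zero_iff.1 hp
  obtain ⟨x, hx⟩ : ∃ x, eval x (coeff m p) ≠ 0 := by
    by_contra! h
    exact hm (MvPolynomial.funext fun x => by rw [h, map_zero])
  exact ⟨x, fun h => hx <| by rw [← coeff_map, h, coeff_zero]⟩

lemma mem_span_of_cross_coeffDerivation_eq_zero [CharZero K]
    {G : MvPolynomial (Fin 3) (MvPolynomial (Fin 2) K)}
    {H : Fin 3 → MvPolynomial (Fin 3) (MvPolynomial (Fin 2) K)}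
    (hHG : H ⬝ᵥ (MvPolynomial.map C ∘ F) = lineForm (X 0) (X 1) * G)
    (hcross : (fun i => lineRestriction (X 0) (X 1) (H i)) ⨯₃
      (fun i => coeffDerivation K (lineRestriction (X 0) (X 1) (H i))) = 0) :
    G ∈ Ideal.span (Set.range (MvPolynomial.map C ∘ F)) := by
  obtain ⟨γ, u, hγ, hu⟩ := exists_eq_smul_of_cross_derivation_eq_zero (coeffDerivation K)
    (fun _ => coeffDerivation_eq_zero_of_dvd) hcross
  choose τ hτ using fun i => exists_lineRestriction_map_C_eq (hu i)
  set γ' : MvPolynomial (Fin 3) (MvPolynomial (Fin 2) K) := rename Fin.castSucc γ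
  have hdvd (i : Fin 3) :
      lineForm (X 0 : MvPolynomial (Fin 2) K) (X 1) ∣ H i - γ' * MvPolynomial.map C (τ i) := by
    rw [lineForm_dvd_iff, map_sub, map_mul, lineRestriction_rename_castSucc, hτ]
    exact sub_eq_zero.2 (congrFun hγ i)
  choose q hq using hdvd
  have hH : H = γ' • (MvPolynomial.map C ∘ τ) + lineForm (X 0 : MvPolynomial (Fin 2) K) (X 1) • q :=
    funext fun i => sub_eq_iff_eq_add'.1 (hq i)
  have hG : γ' * MvPolynomial.map C (τ ⬝ᵥ F) =
      lineForm (X 0) (X 1) * (G - q ⬝ᵥ (MvPolynomial.map C ∘ F)) := by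
    rw [mul_sub, ← hHG, hH, add_dotProduct, smul_dotProduct, smul_dotProduct,
      RingHom.map_dotProduct, smul_eq_mul, smul_eq_mul, add_sub_cancel_right]
  have hzero : γ' * MvPolynomial.map C (τ ⬝ᵥ F) = 0 := by
    have h := congrArg (lineRestriction (X 0) (X 1)) hG
    rw [map_mul, map_mul, lineRestriction_rename_castSucc, lineRestriction_lineForm, zero_mul] at h
    rcases mul_eq_zero.1 h with hγ0 | hτF
    · rw [show γ' = 0 from (congrArg _ hγ0).trans (map_zero _), zero_mul]
    · rw [eq_zero_of_lineRestriction_map_C_eq_zero hτF, map_zero, mul_zero]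
  rw [hzero] at hG
  exact Ideal.mem_span_range_iff_exists_fun.2
    ⟨q, (sub_eq_zero.1 ((mul_eq_zero.1 hG.symm).resolve_left (lineForm_ne_zero _ _))).symm⟩

lemma idealOfVars_pow_le_map_lineRestriction {S : Type*} [CommRing S]
    {I : Ideal (MvPolynomial (Fin 3) S)} {N : ℕ} (hN : idealOfVars (Fin 3) S ^ N ≤ I) (s t : S) :
    idealOfVars (Fin 2) S ^ N ≤ I.map (lineRestriction s t) := by
  have h : idealOfVars (Fin 2) S ≤ (idealOfVars (Fin 3) S).map (lineRestriction s t) := by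
    refine Ideal.span_le.2 (Set.range_subset_iff.2 fun i => ?_)
    have h := Ideal.mem_map_of_mem (lineRestriction s t)
      (Ideal.subset_span (Set.mem_range_self i.castSucc) : X i.castSucc ∈ idealOfVars (Fin 3) S)
    rwa [← rename_X, lineRestriction_rename_castSucc] at h
  calc idealOfVars (Fin 2) S ^ N
      ≤ ((idealOfVars (Fin 3) S).map (lineRestriction s t)) ^ N := Ideal.pow_right_mono h N
    _ ≤ _ := by rw [← Ideal.map_pow]; exact Ideal.map_mono hN

theorem exists_forall_isForm_mem_map_lineRestriction [IsAlgClosed K] [CharZero K]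
    (hF : ∀ i, IsForm (F i) (e i)) {N : ℕ}
    (hN : idealOfVars (Fin 3) K ^ N ≤ Ideal.span (Set.range F))
    {G : MvPolynomial (Fin 3) (MvPolynomial (Fin 2) K)} (hG : IsForm G (n - 1))
    (hGmem : G ∉ (Ideal.span (Set.range F)).map (MvPolynomial.map C))
    (hLG : lineForm (X 0) (X 1) * G ∈ (Ideal.span (Set.range F)).map (MvPolynomial.map C)) :
    ∃ s t : K, ∀ w, IsForm w n → w ∈ (Ideal.span (Set.range F)).map (lineRestriction s t) := by
  rw [Ideal.map_span, ← Set.range_comp] at hGmem hLG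
  obtain ⟨H, hH, hHG⟩ := exists_isForm_coeffs (fun i => (hF i).map C)
    ((isForm_lineForm _ _).mul_of_add_eq hG (by ring)) hLG
  have hh : IsSyzygy (fun i => lineRestriction (X 0) (X 1) (MvPolynomial.map C (F i))) e n
      (fun i => lineRestriction (X 0) (X 1) (H i)) :=
    ⟨fun i => (hH i).lineRestriction, by
      have h := congrArg (lineRestriction (X 0) (X 1)) hHG
      simpa [dotProduct, map_sum] using h⟩
  obtain ⟨x, hx⟩ : ∃ x : Fin 2 → K, MvPolynomial.map (eval x) ∘
      ((fun i => lineRestriction (X 0) (X 1) (H i)) ⨯₃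
      (fun i => coeffDerivation K (lineRestriction (X 0) (X 1) (H i)))) ≠ 0 := by
    by_contra! h
    refine hGmem (mem_span_of_cross_coeffDerivation_eq_zero hHG (funext fun i => ?_))
    by_contra hi
    obtain ⟨x, hx⟩ := exists_map_eval_ne_zero hi
    exact hx (congrFun (h x) i)
  have hmap : MvPolynomial.map (eval x) ∘ (fun i => lineRestriction (X 0) (X 1)
      (MvPolynomial.map C (F i))) = lineRestriction (x 0) (x 1) ∘ F := funext fun i => by
    simp [map_lineRestriction, map_eval_map_C]
  refine ⟨x 0, x 1, fun w hw => ?_⟩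
  have hpow := idealOfVars_pow_le_map_lineRestriction hN (x 0) (x 1)
  rw [Ideal.map_span, ← Set.range_comp] at hpow ⊢
  refine IsSyzygy.mem_of_cross_ne_zero (fun i => (hF i).lineRestriction) hpow
    (hmap ▸ hh.map (eval x)) (hmap ▸ hh.coeffDerivation.map (eval x)) ?_ (by linarith) le_rfl hw
  rwa [← map_comp_cross]

end KernelOnGenericLine

section PolynomialFamily

variable {m n R : Type*} [Fintype n]

lemma exists_mul_eq_smul_one_of_injective_mulVec [Fintype m] [DecidableEq n] [CommRing R]
    [IsDomain R] {M : Matrix m n R} (hM : Function.Injective M.mulVec) :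
    ∃ a : R, a ≠ 0 ∧ ∃ N : Matrix n m R, N * M = a • (1 : Matrix n n R) := by
  classical
  let ι : R →+* FractionRing R := algebraMap R (FractionRing R)
  have hι : Function.Injective ι := IsFractionRing.injective R _
  have hcol : LinearIndependent R (M.map ι).col :=
    (Matrix.mulVec_injective_iff.1 hM).map' ((Algebra.linearMap R (FractionRing R)).compLeft m)
      (LinearMap.ker_eq_bot.2 hι.comp_left)
  obtain ⟨g, hg⟩ := LinearMap.exists_leftInverse_of_injective (Matrix.toLin' (M.map ι))
    (LinearMap.ker_eq_bot.2 <| Matrix.mulVec_injective_iff.2 <|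
      (LinearIndependent.iff_fractionRing R (FractionRing R)).1 hcol)
  obtain ⟨a, ha⟩ := IsLocalization.exist_integer_multiples_of_finite (nonZeroDivisors R)
    fun ij : n × m => LinearMap.toMatrix' g ij.1 ij.2
  choose N hN using ha
  refine ⟨a, nonZeroDivisors.ne_zero a.2, Matrix.of fun i j => N (i, j), ?_⟩
  have hN' : (Matrix.of fun i j => N (i, j)).map ι = ι a • LinearMap.toMatrix' g := by
    ext i j
    exact (hN (i, j)).trans (Algebra.smul_def _ _)
  have hg' : LinearMap.toMatrix' g * M.map ι = 1 := by
    rw [← LinearMap.toMatrix'_toLin' (M.map ι), ← LinearMap.toMatrix'_comp, hg,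
      LinearMap.toMatrix'_id]
  refine Matrix.map_injective hι ?_
  beta_reduce
  rw [Matrix.map_mul, hN', Matrix.smul_mul, hg', Matrix.map_smul' _ _ _ (map_mul ι),
    Matrix.map_one _ (map_zero ι) (map_one ι)]

variable {σ V W : Type*} [AddCommGroup V] [Module K V] [AddCommGroup W] [Module K W]

/-- The linear maps `T x` depend polynomially on `x ∈ K^σ`. This is expressed through the
functionals `φ (T x v)`, so that no bases have to be chosen. -/
def IsPolynomialFamily (T : (σ → K) → V →ₗ[K] W) : Prop :=
  ∀ (φ : Module.Dual K W) (v : V), ∃ p : MvPolynomial σ K, ∀ x, φ (T x v) = eval x p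

namespace IsPolynomialFamily

variable {T : (σ → K) → V →ₗ[K] W}

lemma exists_toMatrix_eq_map [Finite m] [DecidableEq n] (hT : IsPolynomialFamily T)
    (b : Module.Basis n K V) (c : Module.Basis m K W) :
    ∃ M : Matrix m n (MvPolynomial σ K), ∀ x, LinearMap.toMatrix b c (T x) = M.map (eval x) := by
  choose M hM using fun i j => hT (c.coord i) (b j)
  refine ⟨Matrix.of M, fun x => Matrix.ext fun i j => ?_⟩
  rw [LinearMap.toMatrix_apply]
  exact hM i j x

theorem exists_forall_injective_or_exists_kernel [Module.Finite K W] (hT : IsPolynomialFamily T)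
    (b : Module.Basis n K V) :
    (∃ q : MvPolynomial σ K, q ≠ 0 ∧ ∀ x, eval x q ≠ 0 → Function.Injective (T x)) ∨
      ∃ v : n → MvPolynomial σ K, v ≠ 0 ∧ ∀ x, T x (∑ j, eval x (v j) • b j) = 0 := by
  classical
  let c := Module.finBasis K W
  obtain ⟨M, hM⟩ := hT.exists_toMatrix_eq_map b c
  have hrepr (x : σ → K) (u : V) : M.map (eval x) *ᵥ b.repr u = c.repr (T x u) := by
    rw [← hM, LinearMap.toMatrix_mulVec_repr]
  by_cases hinj : Function.Injective M.mulVec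
  · obtain ⟨q, hq, N, hN⟩ := exists_mul_eq_smul_one_of_injective_mulVec hinj
    refine .inl ⟨q, hq, fun x hx => (injective_iff_map_eq_zero (T x)).2 fun u hu => ?_⟩
    have hNx : N.map (eval x) * M.map (eval x) = eval x q • (1 : Matrix n n K) := by
      rw [← Matrix.map_mul, hN, Matrix.map_smul' _ _ _ (map_mul _),
        Matrix.map_one _ (map_zero _) (map_one _)]
    have h : eval x q • ⇑(b.repr u) = 0 := by
      rw [← Matrix.one_mulVec ⇑(b.repr u), ← Matrix.smul_mulVec, ← hNx, ← Matrix.mulVec_mulVec,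
        hrepr, hu, map_zero, Finsupp.coe_zero, Matrix.mulVec_zero]
    exact b.repr.map_eq_zero_iff.1 (DFunLike.coe_injective ((smul_eq_zero.1 h).resolve_left hx))
  · obtain ⟨v, hv, hv0⟩ : ∃ v, M *ᵥ v = 0 ∧ v ≠ 0 := by
      by_contra! h
      exact hinj ((injective_iff_map_eq_zero M.mulVecLin).2 h)
    refine .inr ⟨v, hv0, fun x => c.repr.map_eq_zero_iff.1 (DFunLike.coe_injective ?_)⟩
    rw [← hrepr, b.repr_sum_self]
    funext i
    exact (RingHom.map_mulVec (eval x) M v i).symm.trans (by rw [hv, Pi.zero_apply, map_zero]; rfl)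

theorem exists_forall_surjective [Module.Finite K V] [Module.Finite K W]
    (hT : IsPolynomialFamily T) {x₀ : σ → K} (hx₀ : Function.Surjective (T x₀)) :
    ∃ q : MvPolynomial σ K, q ≠ 0 ∧ ∀ x, eval x q ≠ 0 → Function.Surjective (T x) := by
  let b := Module.finBasis K V
  let c := Module.finBasis K W
  obtain ⟨M, hM⟩ := hT.exists_toMatrix_eq_map b c
  obtain ⟨g, hg⟩ := LinearMap.exists_rightInverse_of_surjective _ (LinearMap.range_eq_top.2 hx₀)
  let N : Matrix _ _ (MvPolynomial σ K) := (LinearMap.toMatrix c b g).map C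
  have hdet (x : σ → K) : eval x (M * N).det = LinearMap.det (T x ∘ₗ g) := by
    have hC : N.map (eval x) = LinearMap.toMatrix c b g := by
      ext i j
      exact eval_C _
    rw [← LinearMap.det_toMatrix c, LinearMap.toMatrix_comp c b c, hM, RingHom.map_det,
      RingHom.mapMatrix_apply, Matrix.map_mul, hC]
  refine ⟨(M * N).det, fun h => one_ne_zero (α := K) ?_, fun x hx => ?_⟩
  · rw [← LinearMap.det_id (M := W), ← hg, ← hdet, h, map_zero]
  · rw [hdet, ← isUnit_iff_ne_zero, ← LinearMap.isUnit_iff_isUnit_det, Module.End.isUnit_iff] at hx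
    exact .of_comp hx.2

end IsPolynomialFamily

end PolynomialFamily

section Specialization

variable {σ τ : Type*}

lemma exists_eval_eq_dual_map_eval (φ : Module.Dual K (MvPolynomial τ K))
    (p : MvPolynomial τ (MvPolynomial σ K)) :
    ∃ q : MvPolynomial σ K, (∀ x, eval x q = φ (map (eval x) p)) ∧
      ∀ n, coeff n q = φ (coeff n (commAlgEquiv K τ σ p)) := by
  induction p using MvPolynomial.induction_on' with
  | monomial m a =>
    have hn (n : σ →₀ ℕ) :
        coeff n (commAlgEquiv K τ σ (monomial m a)) = coeff n a • monomial m 1 := by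
      classical
      ext k
      rw [coeff_coeff_commAlgEquiv, coeff_smul, coeff_monomial, coeff_monomial]
      split_ifs <;> simp
    refine ⟨φ (monomial m 1) • a, fun x => ?_, fun n => ?_⟩
    · rw [smul_eval, map_monomial, ← mul_one (eval x a), ← smul_eq_mul (eval x a), ← smul_monomial,
        map_smul, smul_eq_mul, smul_eq_mul, mul_one, mul_comm]
    · rw [hn, map_smul, coeff_smul, smul_eq_mul, smul_eq_mul, mul_comm]
  | add p₁ p₂ h₁ h₂ =>
    obtain ⟨q₁, hq₁, hq₁'⟩ := h₁
    obtain ⟨q₂, hq₂, hq₂'⟩ := h₂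
    exact ⟨q₁ + q₂, by simp [hq₁, hq₂], by simp [hq₁', hq₂']⟩

lemma mem_map_map_C_of_forall_map_eval_mem [Infinite K] {I : Ideal (MvPolynomial τ K)}
    {p : MvPolynomial τ (MvPolynomial σ K)}
    (h : ∀ x : σ → K, map (eval x) p ∈ I) : p ∈ I.map (map C) := by
  have hcoeff (n : σ →₀ ℕ) : coeff n (commAlgEquiv K τ σ p) ∈ I.restrictScalars K := by
    by_contra hn
    obtain ⟨φ, hφ, hI⟩ := Submodule.exists_le_ker_of_notMem hn
    obtain ⟨q, hq, hq'⟩ := exists_eval_eq_dual_map_eval φ p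
    have hq0 : q = 0 := MvPolynomial.funext fun x => by rw [hq, map_zero]; exact hI (h x)
    exact hφ (by rw [← hq', hq0, coeff_zero])
  let θ : MvPolynomial σ (MvPolynomial τ K) →+* MvPolynomial τ (MvPolynomial σ K) :=
    commAlgEquiv K σ τ
  have hθ : θ.comp C = map C := RingHom.ext fun r => commAlgEquiv_C r
  have hmem := Ideal.mem_map_of_mem θ (mem_map_C_iff.2 hcoeff)
  rw [Ideal.map_map, hθ] at hmem
  exact (commAlgEquiv K τ σ).symm_apply_apply p ▸ hmem

end Specialization

section FiniteLength

lemma supportDim_add_length_le {R M : Type*} [CommRing R] [AddCommGroup M]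
    [Module R M] [Module.Finite R M] {rs : List R} (hrs : RingTheory.Sequence.IsRegular M rs) :
    Module.supportDim R (M ⧸ Ideal.ofList rs • (⊤ : Submodule R M)) + rs.length ≤
      Module.supportDim R M := by
  induction rs generalizing M with
  | nil =>
    rw [Ideal.ofList_nil, Submodule.bot_smul]
    simpa using (Module.supportDim_eq_of_equiv (Submodule.quotEquivOfEqBot ⊥ rfl)).le
  | cons r rs ih =>
    obtain ⟨hr, hrs⟩ := (RingTheory.Sequence.isRegular_cons_iff M r rs).1 hrs
    rw [Module.supportDim_eq_of_equiv (Submodule.quotOfListConsSMulTopEquivQuotSMulTopInner M r rs),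
      List.length_cons, Nat.cast_succ, ← add_assoc]
    exact (add_le_add_left (ih hrs) 1).trans <|
      Module.supportDim_quotSMulTop_succ_le_of_notMem_minimalPrimes fun _ hp =>
        hr.notMem_of_mem_minimalPrimes hp

variable {σ : Type*}

lemma finite_quotient_ofList_of_isRegular [Finite σ] {rs : List (MvPolynomial σ K)}
    (hrs : RingTheory.Sequence.IsRegular (MvPolynomial σ K) rs) (hlen : Nat.card σ ≤ rs.length) :
    Module.Finite K (MvPolynomial σ K ⧸ Ideal.ofList rs) := by
  have hdim := supportDim_add_length_le hrs
  rw [smul_eq_mul, Ideal.mul_top, Module.supportDim_quotient_eq_ringKrullDim,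
    Module.supportDim_self_eq_ringKrullDim, MvPolynomial.ringKrullDim_of_isNoetherianRing,
    ringKrullDim_eq_zero_of_field] at hdim
  rw [Module.finite_iff_krullDimLE_zero, Ring.krullDimLE_iff]
  refine (ENat.WithBot.add_le_add_natCast_right_iff (c := rs.length)).1 (hdim.trans ?_)
  exact add_le_add_right (by exact_mod_cast hlen) 0

lemma weightedHomogeneousComponent_mem_span {ι R : Type*} [CommSemiring R]
    {f : ι → MvPolynomial σ R} {e : ι → ℤ} (hf : ∀ i, IsForm (f i) (e i)) {p : MvPolynomial σ R}
    (hp : p ∈ Ideal.span (Set.range f)) (n : ℤ) :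
    weightedHomogeneousComponent (fun _ => 1) n p ∈ Ideal.span (Set.range f) := by
  obtain ⟨c, rfl⟩ := Finsupp.mem_ideal_span_range_iff_exists_finsupp.1 hp
  rw [Finsupp.sum, map_sum]
  refine Ideal.sum_mem _ fun i _ => ?_
  rw [weightedHomogeneousComponent_mul (hf i)]
  exact Ideal.mul_mem_left _ _ (Ideal.subset_span (Set.mem_range_self i))

variable {ι : Type*} {F : ι → MvPolynomial σ K} {e : ι → ℤ}

lemma exists_X_pow_mem_span [Algebra.IsIntegral K (MvPolynomial σ K ⧸ Ideal.span (Set.range F))]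
    (hF : ∀ i, IsForm (F i) (e i)) (j : σ) :
    ∃ N : ℕ, X j ^ N ∈ Ideal.span (Set.range F) := by
  obtain ⟨q, hq, hq0⟩ := Algebra.IsIntegral.isIntegral (R := K)
    (Ideal.Quotient.mk (Ideal.span (Set.range F)) (X j))
  have hmem : Polynomial.aeval (X j) q ∈ Ideal.span (Set.range F) := by
    rw [← Ideal.Quotient.eq_zero_iff_mem, ← hq0]
    exact (Polynomial.aeval_algHom_apply
      (Ideal.Quotient.mkₐ K (Ideal.span (Set.range F))) (X j) q).symm
  have hlead : weightedHomogeneousComponent (fun _ => 1) (q.natDegree : ℤ)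
      (Polynomial.aeval (X j : MvPolynomial σ K) q) = X j ^ q.natDegree := by
    rw [Polynomial.aeval_eq_sum_range, map_sum, Finset.sum_eq_single q.natDegree]
    · rw [hq.coeff_natDegree, one_smul, (isForm_X_pow j _).weightedHomogeneousComponent_same]
    · intro k _ hk
      rw [map_smul, (isForm_X_pow j k).weightedHomogeneousComponent_ne _
        (Nat.cast_injective.ne hk.symm), smul_zero]
    · simp
  exact ⟨q.natDegree, hlead ▸ weightedHomogeneousComponent_mem_span hF hmem _⟩

lemma exists_idealOfVars_pow_le [Finite σ]
    [Algebra.IsIntegral K (MvPolynomial σ K ⧸ Ideal.span (Set.range F))]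
    (hF : ∀ i, IsForm (F i) (e i)) :
    ∃ N : ℕ, idealOfVars σ K ^ N ≤ Ideal.span (Set.range F) :=
  Ideal.exists_pow_le_of_le_radical_of_fg
    (Ideal.span_le.2 (Set.range_subset_iff.2 (exists_X_pow_mem_span hF))) (idealOfVars_fg σ K)

end FiniteLength

section GradedPieces

variable {I : Ideal (MvPolynomial (Fin 3) K)} {d : ℤ}

instance : Module.Finite K (Rdeg (K := K) d) := by
  rcases lt_or_ge d 0 with hd | hd
  · have : Subsingleton (Rdeg (K := K) d) :=
      ⟨fun p q => Subtype.ext <|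
        (IsForm.eq_zero_of_neg p.2 hd).trans (IsForm.eq_zero_of_neg q.2 hd).symm⟩
    infer_instance
  · lift d to ℕ using hd
    have h : Rdeg (K := K) d = homogeneousSubmodule (Fin 3) K d :=
      Submodule.ext fun _ => isForm_natCast
    rw [h]
    exact Module.Finite.iff_fg.2 (homogeneousSubmodule_fg _ _ d)

lemma mkQ_idealPiece_eq_zero_iff {p : Rdeg (K := K) d} :
    (IdealPiece I d).mkQ p = 0 ↔ (p : MvPolynomial (Fin 3) K) ∈ I :=
  Submodule.Quotient.mk_eq_zero _

lemma mulA_mkQ {L : MvPolynomial (Fin 3) K} (hL : homog L 1) (p : Rdeg (K := K) (d - 1)) :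
    mulA I L hL d ((IdealPiece I (d - 1)).mkQ p) =
      (IdealPiece I d).mkQ ⟨L * p, IsForm.mul_of_add_eq hL p.2 (add_sub_cancel 1 d)⟩ :=
  rfl

lemma mulA_injective_of_nonpos {L : MvPolynomial (Fin 3) K} (hL : homog L 1) (hd : d ≤ 0) :
    Function.Injective (mulA I L hL d) := by
  refine (injective_iff_map_eq_zero _).2 fun a _ => ?_
  obtain ⟨p, rfl⟩ := (IdealPiece I (d - 1)).mkQ_surjective a
  exact mkQ_idealPiece_eq_zero_iff.2 (IsForm.eq_zero_of_neg p.2 (by omega) ▸ I.zero_mem)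

lemma homog_X (i : Fin 3) : homog (X i : MvPolynomial (Fin 3) K) 1 :=
  isForm_X i

lemma homog_lineForm (s t : K) : homog (lineForm s t) 1 :=
  isForm_lineForm s t

lemma isPolynomialFamily_mulA_lineForm : IsPolynomialFamily fun x : Fin 2 → K =>
    mulA I (lineForm (x 0) (x 1)) (homog_lineForm _ _) d := by
  intro φ v
  obtain ⟨p, rfl⟩ := (IdealPiece I (d - 1)).mkQ_surjective v
  let a (i : Fin 3) : K := φ (mulA I (X i) (homog_X i) d ((IdealPiece I (d - 1)).mkQ p))
  refine ⟨C (a 2) - C (a 0) * X 0 - C (a 1) * X 1, fun x => ?_⟩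
  have h : mulA I (lineForm (x 0) (x 1)) (homog_lineForm _ _) d
        ((IdealPiece I (d - 1)).mkQ p) =
      mulA I (X 2) (homog_X 2) d ((IdealPiece I (d - 1)).mkQ p) -
        x 0 • mulA I (X 0) (homog_X 0) d ((IdealPiece I (d - 1)).mkQ p) -
        x 1 • mulA I (X 1) (homog_X 1) d ((IdealPiece I (d - 1)).mkQ p) := by
    rw [mulA_mkQ, mulA_mkQ, mulA_mkQ, mulA_mkQ, ← map_smul, ← map_smul, ← map_sub, ← map_sub]
    refine congrArg _ (Subtype.ext ?_)
    change lineForm (x 0) (x 1) * p.1 = X 2 * p.1 - x 0 • (X 0 * p.1) - x 1 • (X 1 * p.1)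
    rw [lineForm, smul_eq_C_mul, smul_eq_C_mul]
    ring
  rw [h]
  simp [a, mul_comm]

theorem exists_forall_mulA_injective_or_exists_kernel [Infinite K]
    (I : Ideal (MvPolynomial (Fin 3) K)) (d : ℤ) :
    (∃ q : MvPolynomial (Fin 2) K, q ≠ 0 ∧ ∀ x, eval x q ≠ 0 →
      Function.Injective (mulA I (lineForm (x 0) (x 1)) (homog_lineForm _ _) d)) ∨
    ∃ G : MvPolynomial (Fin 3) (MvPolynomial (Fin 2) K), IsForm G (d - 1) ∧
      G ∉ I.map (map C) ∧ lineForm (X 0) (X 1) * G ∈ I.map (map C) := by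
  let b := Module.finBasis K (Ad I (d - 1))
  refine (isPolynomialFamily_mulA_lineForm.exists_forall_injective_or_exists_kernel b).imp_right ?_
  rintro ⟨v, hv, hker⟩
  choose g hg using fun j => (IdealPiece I (d - 1)).mkQ_surjective (b j)
  let G : MvPolynomial (Fin 3) (MvPolynomial (Fin 2) K) :=
    ∑ j, C (v j) * map C (g j : MvPolynomial (Fin 3) K)
  have hG (x : Fin 2 → K) :
      map (eval x) G = (∑ j, eval x (v j) • g j : Rdeg (K := K) (d - 1)) := by
    simp [G, map_eval_map_C, smul_eq_C_mul]
  have hclass (x : Fin 2 → K) : (IdealPiece I (d - 1)).mkQ (∑ j, eval x (v j) • g j) =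
      ∑ j, eval x (v j) • b j := by
    simp only [map_sum, map_smul, hg]
  refine ⟨G, .sum _ _ _ fun j _ => (IsForm.map (g j).2 C).C_mul _,
    fun hmem => hv (funext fun j => ?_), mem_map_map_C_of_forall_map_eval_mem fun x => ?_⟩
  · refine MvPolynomial.funext fun x => ?_
    have hx : map (eval x) G ∈ I := by
      have h := Ideal.mem_map_of_mem (map (eval x)) hmem
      rwa [Ideal.map_map, show (map (eval x)).comp (map C) = RingHom.id _ from
        RingHom.ext (map_eval_map_C x), Ideal.map_id] at h
    rw [hG, ← mkQ_idealPiece_eq_zero_iff, hclass] at hx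
    exact Fintype.linearIndependent_iff.1 b.linearIndependent _ hx j
  · have hx := hker x
    rw [← hclass, mulA_mkQ, mkQ_idealPiece_eq_zero_iff] at hx
    simpa [map_lineForm, hG] using hx

variable {F : Fin 3 → MvPolynomial (Fin 3) K} {e : Fin 3 → ℤ} {s t : K} {N : ℕ}

lemma mulA_lineForm_surjective (hF : ∀ i, IsForm (F i) (e i))
    (h : ∀ w, IsForm w d → w ∈ (Ideal.span (Set.range F)).map (lineRestriction s t)) :
    Function.Surjective
      (mulA (Ideal.span (Set.range F)) (lineForm s t) (homog_lineForm s t) d) := by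
  intro a
  obtain ⟨⟨p, hp⟩, rfl⟩ := (IdealPiece _ d).mkQ_surjective a
  obtain ⟨r, hr, hrp⟩ := (Ideal.mem_map_iff_of_surjective (lineRestriction s t)
    fun u => ⟨_, lineRestriction_rename_castSucc s t u⟩).1 (h _ (IsForm.lineRestriction hp))
  obtain ⟨q, hq⟩ := (lineForm_dvd_iff s t (p := r - p)).2 (by rw [map_sub, hrp, sub_self])
  refine ⟨(IdealPiece _ (d - 1)).mkQ ⟨-weightedHomogeneousComponent _ (d - 1) q,
    neg_mem (weightedHomogeneousComponent_isWeightedHomogeneous _ _)⟩, ?_⟩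
  rw [mulA_mkQ, ← sub_eq_zero, ← map_sub, mkQ_idealPiece_eq_zero_iff]
  have hcomp := congrArg (weightedHomogeneousComponent (fun _ => 1) d) hq
  rw [map_sub, mul_comm, weightedHomogeneousComponent_mul (isForm_lineForm s t),
    IsWeightedHomogeneous.weightedHomogeneousComponent_same hp] at hcomp
  convert neg_mem (weightedHomogeneousComponent_mem_span hF hr d) using 1
  change lineForm s t * -_ - p = _
  linear_combination hcomp

theorem exists_forall_mulA_injective_or_surjective [IsAlgClosed K] [CharZero K]
    (hF : ∀ i, IsForm (F i) (e i)) (hN : idealOfVars (Fin 3) K ^ N ≤ Ideal.span (Set.range F))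
    (d : ℤ) :
    ∃ q : MvPolynomial (Fin 2) K, q ≠ 0 ∧ ∀ x, eval x q ≠ 0 →
      Function.Injective
        (mulA (Ideal.span (Set.range F)) (lineForm (x 0) (x 1)) (homog_lineForm _ _) d) ∨
      Function.Surjective
        (mulA (Ideal.span (Set.range F)) (lineForm (x 0) (x 1)) (homog_lineForm _ _) d) := by
  have := CharZero.infinite K
  rcases exists_forall_mulA_injective_or_exists_kernel (Ideal.span (Set.range F)) d with
    ⟨q, hq, hinj⟩ | ⟨G, hG, hGmem, hLG⟩
  · exact ⟨q, hq, fun x hx => .inl (hinj x hx)⟩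
  obtain ⟨s, t, hst⟩ := exists_forall_isForm_mem_map_lineRestriction hF hN hG hGmem hLG
  obtain ⟨q, hq, hsurj⟩ := isPolynomialFamily_mulA_lineForm.exists_forall_surjective
    (x₀ := ![s, t]) (mulA_lineForm_surjective hF hst)
  exact ⟨q, hq, fun x hx => .inr (hsurj x hx)⟩

lemma mulA_lineForm_surjective_of_le (hF : ∀ i, IsForm (F i) (e i))
    (hN : idealOfVars (Fin 3) K ^ N ≤ Ideal.span (Set.range F)) (hd : N ≤ d) :
    Function.Surjective
      (mulA (Ideal.span (Set.range F)) (lineForm s t) (homog_lineForm s t) d) :=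
  mulA_lineForm_surjective hF fun _ hw =>
    idealOfVars_pow_le_map_lineRestriction hN s t (hw.mem_pow_idealOfVars hd)

theorem exists_mulA_lineForm_injective_or_surjective [IsAlgClosed K] [CharZero K]
    (hF : ∀ i, IsForm (F i) (e i)) (hN : idealOfVars (Fin 3) K ^ N ≤ Ideal.span (Set.range F)) :
    ∃ s t : K, ∀ d : ℤ,
      Function.Injective (mulA (Ideal.span (Set.range F)) (lineForm s t) (homog_lineForm s t) d) ∨
      Function.Surjective
        (mulA (Ideal.span (Set.range F)) (lineForm s t) (homog_lineForm s t) d) := by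
  have := CharZero.infinite K
  choose q hq hmax using exists_forall_mulA_injective_or_surjective hF hN
  have hprod : ∏ d ∈ Finset.Ioo (0 : ℤ) N, q d ≠ 0 := Finset.prod_ne_zero_iff.2 fun d _ => hq d
  obtain ⟨x, hx⟩ : ∃ x, eval x (∏ d ∈ Finset.Ioo (0 : ℤ) N, q d) ≠ 0 := by
    contrapose! hprod
    exact MvPolynomial.funext fun x => by rw [hprod, map_zero]
  rw [map_prod, Finset.prod_ne_zero_iff] at hx
  refine ⟨x 0, x 1, fun d => ?_⟩
  rcases le_or_gt d 0 with hd | hd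
  · exact .inl (mulA_injective_of_nonpos _ hd)
  rcases le_or_gt (N : ℤ) d with hNd | hNd
  · exact .inr (mulA_lineForm_surjective_of_le hF hN hNd)
  · exact hmax d x (hx d (Finset.mem_Ioo.2 ⟨hd, hNd⟩))

end GradedPieces

end WeakLefschetz

/-- If `F₁, F₂, F₃` are homogeneous polynomials of positive degree forming a
regular sequence in `R = K[x,y,z]`, then the Artinian graded algebra `A = R/(F₁, F₂, F₃)` has
the Weak Lefschetz Property: there is a linear form `L` such that multiplication by `L` from
each graded piece of `A` to the next is injective or surjective. -/
theorem statement5 {K : Type*} [Field K] [IsAlgClosed K] [CharZero K]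
    (F : Fin 3 → MvPolynomial (Fin 3) K)
    (hdeg : ∀ i, ∃ e : ℤ, 0 < e ∧ homog (F i) e)
    (hreg : RingTheory.Sequence.IsRegular (MvPolynomial (Fin 3) K) [F 0, F 1, F 2]) :
    ∃ (L : MvPolynomial (Fin 3) K) (hL : homog L 1),
      ∀ d : ℤ, Function.Injective (mulA (Ideal.span {F 0, F 1, F 2}) L hL d) ∨
        Function.Surjective (mulA (Ideal.span {F 0, F 1, F 2}) L hL d) := by
  have hset : ({F 0, F 1, F 2} : Set (MvPolynomial (Fin 3) K)) = Set.range F := by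
    ext p
    simp [Fin.exists_fin_succ, eq_comm]
  have hspan : Ideal.ofList [F 0, F 1, F 2] = Ideal.span (Set.range F) :=
    congrArg Ideal.span (by ext p; simp [← hset])
  choose e _ hF using hdeg
  have hfinite := WeakLefschetz.finite_quotient_ofList_of_isRegular hreg (by simp)
  rw [hspan] at hfinite
  obtain ⟨N, hN⟩ := WeakLefschetz.exists_idealOfVars_pow_le hF
  obtain ⟨s, t, hst⟩ := WeakLefschetz.exists_mulA_lineForm_injective_or_surjective hF hN
  rw [hset]
  exact ⟨WeakLefschetz.lineForm s t, WeakLefschetz.homog_lineForm s t, hst⟩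

end
end
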